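/- There exist absolute constants c > 0 and C > 0 such that the following holds for all sufficiently large N. Let A ⊆ [N] be a set with no non-zero square differences, of density α = |A|/N ≥ N^{-1/3}, and let g = 1_A − α·1_{[N]}. Then there exist reals B, Q, K with c·α^C ≤ B, Q, K ≤ C·α^{−C} and a set 𝓑 ⊆ Q_{≤Q} such that: (1) for each a/q ∈ 𝓑 there exists γ_{a/q} ∈ (0,1] with ‖γ_{a/q} − a/q‖ ≤ C·α^{−C}/N, and Σ_{a/q ∈ 𝓑} |1̂_A(γ_{a/q})| ≥ c·B·|A|·Q^{1/2}/(log(1/α))²; and (2) for each a/q ∈ 𝓑 (in lowest terms), ∫_{𝔐(a/q; N, K)} |ĝ(γ)|² dγ ≥ c·α·|A|/B². -/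

import Mathlib

open MeasureTheory

/-- `A` has no non-zero square differences. -/
def NoSquareDiff (A : Finset ℕ) : Prop :=
  ∀ a ∈ A, ∀ b ∈ A, ∀ n : ℕ, 0 < n → a ≠ b + n ^ 2

/-- `e(x) = e^{2πix}`. -/
noncomputable def eu (x : ℝ) : ℂ := Complex.exp (2 * Real.pi * Complex.I * x)

/-- The Fourier transform of the indicator of `A`: `1̂_A(γ) = ∑_{a ∈ A} e(aγ)`. -/
noncomputable def hatInd (A : Finset ℕ) (γ : ℝ) : ℂ := ∑ a ∈ A, eu (a * γ)

/-- The major arc around the reduced rational `x`: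
`𝔐(x; N, K) = {γ ∈ (0,1] : ‖γ - x‖ ≤ K/(x.den · N)}`, where `‖·‖` is the distance to the
nearest integer. -/
def majorArcQ (x : ℚ) (N : ℕ) (K : ℝ) : Set ℝ :=
  {γ ∈ Set.Ioc (0 : ℝ) 1 | |γ - (x : ℝ) - round (γ - (x : ℝ))| ≤ K / (x.den * N)}

/-!
Weight the squares by their gaps: for the Weyl sum `T_M(γ) = ∑_{n ≤ M} (2n - 1) e(n²γ)`, the
integral of `ĝ · conj 1̂_A · T_M` counts pairs in `A` whose difference is a square (there are none)
minus the expected number of such pairs, so `∫ |ĝ| |1̂_A| |T_M|` is at least of order `α |A| M²`.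

The differenced Weyl sum controls `T_M` by the number of `h ≤ M` with `2hγ` close to an integer. If
few are, `T_M` is tiny; if many are, `γ` is close to a rational `x` of small denominator `q`, and
there the quadratic Gauss sum gives `|T_M(γ)| ≪ q^{-1/2} min(M², 1 / ‖γ - x‖)` up to a small error.
The error is absorbed by Parseval, and on the arc around `x` the majorant has `L²` norm of order
`M q^{-1/2}`, so Cauchy–Schwarz leaves
`∑_x q^{-1/2} max_arc |1̂_A| · (∫_arc |ĝ|²)^{1/2} ≫ α |A| M`.

Pigeonholing dyadically, first in the denominator (giving `Q`) and then in the energy of the arc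
(giving `B`), costs two factors `log (1 / α)`, because both quantities range between powers of `α`
once negligible energies are discarded. When `N` is at most a power of `1 / α` a single arc already
covers the circle.
-/

section

open Finset
open scoped ComplexConjugate FourierTransform Real

/-! ### The additive character -/

lemma eu_eq_fourierChar (x : ℝ) : eu x = 𝐞 x := by
  rw [Real.fourierChar_apply, eu]
  push_cast
  ring_nf

lemma norm_eu (x : ℝ) : ‖eu x‖ = 1 := by
  rw [eu_eq_fourierChar, Circle.norm_coe]

lemma continuous_eu : Continuous eu := by
  unfold eu
  fun_prop

lemma eu_zero : eu 0 = 1 := by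
  rw [eu_eq_fourierChar, AddChar.map_zero_eq_one, Circle.coe_one]

lemma eu_add (x y : ℝ) : eu (x + y) = eu x * eu y := by
  simp only [eu_eq_fourierChar, AddChar.map_add_eq_mul, Circle.coe_mul]

lemma eu_nat_mul (n : ℕ) (x : ℝ) : eu (n * x) = eu x ^ n := by
  rw [← nsmul_eq_mul, eu_eq_fourierChar, eu_eq_fourierChar, AddChar.map_nsmul_eq_pow,
    Circle.coe_pow]

lemma conj_eu (x : ℝ) : conj (eu x) = eu (-x) := by
  rw [eu_eq_fourierChar, eu_eq_fourierChar, AddChar.map_neg_eq_inv, Circle.coe_inv_eq_conj]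

lemma eu_intCast (k : ℤ) : eu k = 1 :=
  Complex.exp_eq_one_iff.2 ⟨k, by push_cast; ring⟩

lemma eu_add_intCast (x : ℝ) (k : ℤ) : eu (x + k) = eu x := by
  rw [eu_add, eu_intCast, mul_one]

lemma norm_eu_sub_one (x : ℝ) : ‖eu x - 1‖ = 2 * |Real.sin (π * x)| := by
  have : eu x = Complex.exp (Complex.I * ((2 * π * x : ℝ) : ℂ)) := by
    rw [eu]
    push_cast
    ring_nf
  rw [this, Complex.norm_exp_I_mul_ofReal_sub_one, norm_mul, Real.norm_ofNat, Real.norm_eq_abs,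
    show 2 * π * x / 2 = π * x by ring]

lemma norm_eu_sub_eu_le (x y : ℝ) : ‖eu x - eu y‖ ≤ 2 * π * |x - y| := by
  have hfactor : eu x - eu y = eu y * (eu (x - y) - 1) := by
    rw [mul_sub, ← eu_add, add_sub_cancel, mul_one]
  have hsin : |Real.sin (π * (x - y))| ≤ π * |x - y| := by
    simpa only [abs_mul, abs_of_pos Real.pi_pos] using Real.abs_sin_le_abs (x := π * (x - y))
  rw [hfactor, norm_mul, norm_eu, one_mul, norm_eu_sub_one]
  linarith

lemma four_mul_norm_le_norm_eu_sub_one (x : ℝ) : 4 * ‖(x : UnitAddCircle)‖ ≤ ‖eu x - 1‖ := by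
  set t := x - round x with ht
  have hx : eu x = eu t := by
    rw [← eu_add_intCast t (round x), ht, sub_add_cancel]
  have habs : |π * t| = π * |t| := by rw [abs_mul, abs_of_pos Real.pi_pos]
  have hjordan : 2 / π * |π * t| ≤ |Real.sin (π * t)| := by
    refine Real.mul_abs_le_abs_sin ?_
    rw [habs]
    nlinarith [abs_sub_round x, Real.pi_pos]
  have hcancel : 2 / π * (π * |t|) = 2 * |t| := by field_simp
  rw [UnitAddCircle.norm_eq, hx, norm_eu_sub_one]
  rw [habs, hcancel] at hjordan
  linarith

lemma two_mul_norm_mul_norm_geom_sum_eu_le (θ : ℝ) (n : ℕ) :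
    2 * ‖(θ : UnitAddCircle)‖ * ‖∑ m ∈ range n, eu θ ^ m‖ ≤ 1 := by
  have hgeom : ‖∑ m ∈ range n, eu θ ^ m‖ * ‖eu θ - 1‖ ≤ 2 := by
    rw [← norm_mul, geom_sum_mul]
    refine (norm_sub_le _ _).trans ?_
    rw [norm_pow, norm_eu, one_pow, norm_one, one_add_one_eq_two]
  have := mul_le_mul_of_nonneg_left (four_mul_norm_le_norm_eu_sub_one θ)
    (norm_nonneg (∑ m ∈ range n, eu θ ^ m))
  linarith

/-! ### Summation by parts and differencing -/

lemma norm_sum_smul_le_of_norm_partial_sum_le {𝕜 E : Type*} [NormedField 𝕜]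
    [NormedAddCommGroup E] [NormedSpace 𝕜 E] (f : ℕ → 𝕜) (ψ : ℕ → E) (n : ℕ) {S F V : ℝ}
    (hV : 0 ≤ V) (hψS : ∀ m ≤ n, ‖∑ i ∈ range m, ψ i‖ ≤ S) (hfF : ‖f (n - 1)‖ ≤ F)
    (hfV : ∀ i, i + 1 < n → ‖f (i + 1) - f i‖ ≤ V) :
    ‖∑ i ∈ range n, f i • ψ i‖ ≤ S * (F + n * V) := by
  have hS : 0 ≤ S := (norm_nonneg _).trans (hψS 0 n.zero_le)
  have hboundary : ‖f (n - 1) • ∑ i ∈ range n, ψ i‖ ≤ F * S := by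
    rw [norm_smul]
    exact mul_le_mul hfF (hψS n le_rfl) (norm_nonneg _) ((norm_nonneg _).trans hfF)
  have hvariation : ‖∑ i ∈ range (n - 1), (f (i + 1) - f i) • ∑ j ∈ range (i + 1), ψ j‖
      ≤ n * (V * S) :=
    calc _ ≤ ∑ _i ∈ range (n - 1), V * S := norm_sum_le_of_le _ fun i hi => by
          have hin := mem_range.1 hi
          rw [norm_smul]
          exact mul_le_mul (hfV i (by omega)) (hψS _ (by omega)) (norm_nonneg _) hV
      _ = ((n - 1 : ℕ) : ℝ) * (V * S) := by rw [sum_const, card_range, nsmul_eq_mul]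
      _ ≤ n * (V * S) := by
          gcongr
          exact n.sub_le 1
  rw [sum_range_by_parts]
  linarith [norm_sub_le (f (n - 1) • ∑ i ∈ range n, ψ i)
    (∑ i ∈ range (n - 1), (f (i + 1) - f i) • ∑ j ∈ range (i + 1), ψ j)]

lemma norm_sum_sq_le_two_mul_re_sum_mul_conj (f : ℕ → ℂ) (n : ℕ) :
    ‖∑ i ∈ range n, f i‖ ^ 2 ≤
      2 * (∑ i ∈ range n, f i * conj (∑ j ∈ range (i + 1), f j)).re := by
  induction n with
  | zero => simp
  | succ n ih =>
    rw [sum_range_succ, sum_range_succ, sum_range_succ]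
    set S := ∑ i ∈ range n, f i
    rw [← Complex.normSq_eq_norm_sq] at ih ⊢
    simp only [Complex.normSq_apply, Complex.add_re, Complex.add_im, Complex.mul_re,
      Complex.conj_re, Complex.conj_im] at ih ⊢
    nlinarith [sq_nonneg (f n).re, sq_nonneg (f n).im]

lemma norm_sum_sq_le_two_mul_sum_norm_correlation (f : ℕ → ℂ) (n : ℕ) :
    ‖∑ i ∈ range n, f i‖ ^ 2 ≤
      2 * ∑ h ∈ range n, ‖∑ m ∈ range (n - h), f (h + m) * conj (f m)‖ := by
  have hflip : ∑ i ∈ range n, f i * conj (∑ j ∈ range (i + 1), f j) =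
      ∑ h ∈ range n, ∑ m ∈ range (n - h), f (h + m) * conj (f m) := by
    rw [← sum_range_diag_flip n fun h m => f (h + m) * conj (f m)]
    refine sum_congr rfl fun i _ => ?_
    rw [← sum_range_reflect f, map_sum, mul_sum]
    refine sum_congr rfl fun j hj => ?_
    have := mem_range.1 hj
    rw [Nat.add_sub_cancel, Nat.add_sub_cancel' (by omega)]
  refine (norm_sum_sq_le_two_mul_re_sum_mul_conj f n).trans ?_
  rw [hflip]
  gcongr
  exact (Complex.re_le_norm _).trans (norm_sum_le _ _)

lemma norm_partial_sum_le_of_periodic {E : Type*} [SeminormedAddCommGroup E] {q : ℕ} (hq : 0 < q)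
    {ψ : ℕ → E} (hper : Function.Periodic ψ q) (hsum : ∑ j ∈ range q, ψ j = 0) {c : ℝ}
    (hψ : ∀ j, ‖ψ j‖ ≤ c) (m : ℕ) : ‖∑ j ∈ range m, ψ j‖ ≤ q * c := by
  induction m using Nat.strong_induction_on with
  | _ m ih =>
    rcases lt_or_ge m q with hm | hm
    · have : 0 ≤ c := (norm_nonneg _).trans (hψ 0)
      calc ‖∑ j ∈ range m, ψ j‖ ≤ ∑ _j ∈ range m, c := norm_sum_le_of_le _ fun j _ => hψ j
        _ = m * c := by rw [sum_const, card_range, nsmul_eq_mul]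
        _ ≤ q * c := by gcongr
    · obtain ⟨k, rfl⟩ := Nat.exists_eq_add_of_le hm
      rw [sum_range_add, hsum, zero_add]
      simp only [add_comm q, hper _]
      exact ih k (by omega)

/-! ### Quadratic Gauss sums -/

lemma norm_sum_addChar_sq_sq_le {R : Type*} [CommRing R] [Fintype R] [DecidableEq R]
    {ψ : AddChar R ℂ} (hψ : ψ.IsPrimitive) :
    ‖∑ r, ψ (r ^ 2)‖ ^ 2 ≤ Fintype.card R * #{h : R | 2 * h = 0} := by
  have hshift (s : R) : ∑ r, ψ (r ^ 2) * ψ (-s ^ 2) = ∑ h, ψ (h ^ 2) * ψ (s * (2 * h)) := by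
    rw [← Equiv.sum_comp (Equiv.addRight s)]
    refine sum_congr rfl fun h _ => ?_
    rw [← AddChar.map_add_eq_mul, ← AddChar.map_add_eq_mul, Equiv.coe_addRight]
    ring_nf
  have hexpand : ((‖∑ r, ψ (r ^ 2)‖ ^ 2 : ℝ) : ℂ) =
      ∑ h ∈ {h : R | 2 * h = 0}, ψ (h ^ 2) * Fintype.card R := by
    push_cast
    rw [← Complex.mul_conj', map_sum, sum_mul_sum, sum_comm]
    simp only [← AddChar.map_neg_eq_conj, hshift]
    rw [sum_comm, sum_filter]
    refine sum_congr rfl fun h _ => ?_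
    rw [← mul_sum, AddChar.sum_mulShift _ hψ]
    split_ifs <;> simp
  calc ‖∑ r, ψ (r ^ 2)‖ ^ 2 = ‖((‖∑ r, ψ (r ^ 2)‖ ^ 2 : ℝ) : ℂ)‖ := by
        rw [Complex.norm_real, Real.norm_of_nonneg (by positivity)]
    _ ≤ ∑ _h ∈ {h : R | 2 * h = 0}, (Fintype.card R : ℝ) := by
        rw [hexpand]
        refine norm_sum_le_of_le _ fun h _ => ?_
        rw [norm_mul, AddChar.norm_apply, one_mul, Complex.norm_natCast]
    _ = Fintype.card R * #{h : R | 2 * h = 0} := by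
        rw [sum_const, nsmul_eq_mul, mul_comm]

lemma card_two_mul_eq_zero_le (q : ℕ) [NeZero q] : #{h : ZMod q | 2 * h = 0} ≤ 2 := by
  have hsub : ({h : ZMod q | 2 * h = 0} : Finset _) ⊆ {0, ((q / 2 : ℕ) : ZMod q)} := by
    intro h hh
    have hlt := ZMod.val_lt h
    have hdvd : q ∣ 2 * h.val := by
      rw [← ZMod.natCast_eq_zero_iff]
      push_cast
      rw [ZMod.natCast_zmod_val, (mem_filter.1 hh).2]
    obtain ⟨k, hk⟩ := hdvd
    have hk2 : k < 2 := by
      by_contra! hc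
      nlinarith
    rw [mem_insert, mem_singleton, ← ZMod.val_eq_zero, ← ZMod.natCast_zmod_val h,
      ZMod.val_cast_of_lt hlt]
    interval_cases k
    · exact .inl (by omega)
    · exact .inr (by congr 1; omega)
  exact (card_le_card hsub).trans card_le_two

lemma norm_sum_eu_sq_mul_rat_sq_le (x : ℚ) :
    ‖∑ r ∈ range x.den, eu (((r : ℝ) + 1) ^ 2 * x)‖ ^ 2 ≤ 2 * x.den := by
  have : NeZero x.den := ⟨x.den_nz⟩
  set ψ := AddChar.mulShift (ZMod.stdAddChar (N := x.den)) x.num with hψdef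
  have hψ : ψ.IsPrimitive := by
    have hunit : IsUnit (x.num : ZMod x.den) := by
      rw [ZMod.coe_int_isUnit_iff_isCoprime, isCoprime_comm]
      exact x.isCoprime_num_den
    intro a ha
    rw [hψdef, AddChar.mulShift_mulShift]
    exact ZMod.isPrimitive_stdAddChar _ (by rwa [Ne, hunit.mul_right_eq_zero])
  have hterm (r : ℕ) : eu (((r : ℝ) + 1) ^ 2 * x) = ψ (((r : ZMod x.den) + 1) ^ 2) := by
    have hcoe := ZMod.stdAddChar_coe (N := x.den) (x.num * ((r : ℤ) + 1) ^ 2)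
    push_cast at hcoe
    rw [hψdef, AddChar.mulShift_apply, hcoe, eu, Rat.cast_def x]
    push_cast
    ring_nf
  have hsum : ∑ r ∈ range x.den, eu (((r : ℝ) + 1) ^ 2 * x) = ∑ r, ψ (r ^ 2) := by
    rw [← Equiv.sum_comp (Equiv.addRight (1 : ZMod x.den))]
    exact sum_bij' (fun r _ => (r : ZMod x.den)) (fun s _ => s.val) (by simp)
      (fun s _ => mem_range.2 (ZMod.val_lt s))
      (fun r hr => ZMod.val_cast_of_lt (mem_range.1 hr))
      (fun s _ => ZMod.natCast_zmod_val s) (fun r _ => hterm r)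
  rw [hsum, mul_comm]
  refine (norm_sum_addChar_sq_sq_le hψ).trans ?_
  rw [ZMod.card]
  gcongr
  exact_mod_cast card_two_mul_eq_zero_le x.den

/-! ### Weighted Weyl sums -/

/-- The weighted Weyl sum `∑_{n ≤ M} (2n - 1) e(n²γ)`, indexed by `j = n - 1`. The weight `2n - 1`
is the gap between `(n - 1)²` and `n²`, so that near `γ = 0` the sum behaves like `∫₀^{M²} e(tγ) dt`
without any singular factor. -/
noncomputable def weylSum (M : ℕ) (γ : ℝ) : ℂ :=
  ∑ j ∈ range M, (2 * (j : ℂ) + 1) * eu (((j : ℝ) + 1) ^ 2 * γ)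

lemma norm_two_mul_natCast_add_one (j : ℕ) : ‖2 * (j : ℂ) + 1‖ = 2 * j + 1 := by
  exact_mod_cast Complex.norm_natCast (2 * j + 1)

lemma sum_range_two_mul_add_one (M : ℕ) : ∑ j ∈ range M, (2 * (j : ℝ) + 1) = (M : ℝ) ^ 2 := by
  induction M with
  | zero => simp
  | succ M ih =>
    rw [sum_range_succ, ih]
    push_cast
    ring

lemma continuous_weylSum (M : ℕ) : Continuous (weylSum M) := by
  have := continuous_eu
  unfold weylSum
  fun_prop

lemma norm_weylSum_le (M : ℕ) (γ : ℝ) : ‖weylSum M γ‖ ≤ (M : ℝ) ^ 2 := by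
  rw [← sum_range_two_mul_add_one]
  refine norm_sum_le_of_le _ fun j _ => ?_
  rw [norm_mul, norm_eu, mul_one, norm_two_mul_natCast_add_one]

lemma weylSum_add_intCast (M : ℕ) (γ : ℝ) (k : ℤ) : weylSum M (γ + k) = weylSum M γ := by
  refine sum_congr rfl fun j _ => ?_
  have : ((j : ℝ) + 1) ^ 2 * (γ + k) =
      ((j : ℝ) + 1) ^ 2 * γ + ((((j : ℤ) + 1) ^ 2 * k : ℤ) : ℝ) := by
    push_cast
    ring
  rw [this, eu_add_intCast]

/-! ### Weyl sums near rationals -/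

lemma norm_eu_sub_eu_sub_mul_le {x y : ℝ} (hxy : 2 * π * |x - y| ≤ 1) :
    ‖eu x - eu y - 2 * π * Complex.I * (x - y) * eu x‖ ≤ (2 * π * |x - y|) ^ 2 := by
  set z : ℂ := 2 * π * Complex.I * ((y - x : ℝ) : ℂ) with hz
  have hnorm : ‖z‖ = 2 * π * |x - y| := by
    simp [hz, abs_of_pos Real.pi_pos, abs_sub_comm y x, -Complex.ofReal_sub]
  have hy : eu y = eu x * Complex.exp z := by
    rw [hz, ← eu, ← eu_add, add_sub_cancel]
  have hfactor : eu x - eu y - 2 * π * Complex.I * (x - y) * eu x =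
      -(eu x * (Complex.exp z - 1 - z)) := by
    rw [hy, hz]
    push_cast
    ring
  rw [hfactor, norm_neg, norm_mul, norm_eu, one_mul, ← hnorm]
  exact Complex.norm_exp_sub_one_sub_id_le (hnorm.trans_le hxy)

lemma two_pi_mul_abs_mul_norm_weylSum_le {M : ℕ} {β : ℝ} (hβ : 4 * π * M * |β| ≤ 1) :
    2 * π * |β| * ‖weylSum M β‖ ≤ 2 + 16 * π ^ 2 * β ^ 2 * M ^ 3 := by
  set ε : ℕ → ℂ := fun j => eu (((j + 1 : ℕ) : ℝ) ^ 2 * β) - eu ((j : ℝ) ^ 2 * β) -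
    2 * π * Complex.I * (((((j + 1 : ℕ) : ℝ) ^ 2 * β : ℝ) : ℂ) - (((j : ℝ) ^ 2 * β : ℝ) : ℂ)) *
      eu (((j + 1 : ℕ) : ℝ) ^ 2 * β) with hε
  have hgap (j : ℕ) (hj : j ∈ range M) :
      2 * π * |((j + 1 : ℕ) : ℝ) ^ 2 * β - (j : ℝ) ^ 2 * β| ≤ 4 * π * M * |β| := by
    have hjM : (j : ℝ) + 1 ≤ M := by exact_mod_cast mem_range.1 hj
    have hfactor : ((j + 1 : ℕ) : ℝ) ^ 2 * β - (j : ℝ) ^ 2 * β = (2 * j + 1) * β := by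
      push_cast
      ring
    rw [hfactor, abs_mul, abs_of_pos (by positivity)]
    nlinarith [mul_nonneg Real.pi_pos.le (abs_nonneg β)]
  have herr : ‖∑ j ∈ range M, ε j‖ ≤ 16 * π ^ 2 * β ^ 2 * M ^ 3 :=
    calc ‖∑ j ∈ range M, ε j‖ ≤ ∑ _j ∈ range M, (4 * π * M * |β|) ^ 2 :=
          norm_sum_le_of_le _ fun j hj =>
            (norm_eu_sub_eu_sub_mul_le ((hgap j hj).trans hβ)).trans
              (pow_le_pow_left₀ (by positivity) (hgap j hj) 2)
      _ = 16 * π ^ 2 * β ^ 2 * M ^ 3 := by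
          rw [sum_const, card_range, nsmul_eq_mul, mul_pow, sq_abs]
          ring
  have htelescope : 2 * π * Complex.I * β * weylSum M β =
      eu ((M : ℝ) ^ 2 * β) - eu (((0 : ℕ) : ℝ) ^ 2 * β) - ∑ j ∈ range M, ε j := by
    rw [← sum_range_sub (fun j : ℕ => eu ((j : ℝ) ^ 2 * β)) M, ← sum_sub_distrib, weylSum, mul_sum]
    refine sum_congr rfl fun j _ => ?_
    simp only [hε]
    push_cast
    ring
  have hnorm : 2 * π * |β| * ‖weylSum M β‖ = ‖2 * π * Complex.I * β * weylSum M β‖ := by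
    simp [abs_of_pos Real.pi_pos]
  rw [hnorm, htelescope]
  refine (norm_sub_le _ _).trans (add_le_add ((norm_sub_le _ _).trans ?_) herr)
  rw [norm_eu, norm_eu, one_add_one_eq_two]

lemma norm_weylTerm_succ_sub_le {M i : ℕ} (hi : i + 1 < M) (β : ℝ) :
    ‖(2 * ((i + 1 : ℕ) : ℂ) + 1) * eu ((((i + 1 : ℕ) : ℝ) + 1) ^ 2 * β) -
      (2 * (i : ℂ) + 1) * eu (((i : ℝ) + 1) ^ 2 * β)‖ ≤ 2 + 8 * π * |β| * M ^ 2 := by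
  have hiM : (i : ℝ) + 2 ≤ M := by exact_mod_cast hi
  set u := eu ((((i + 1 : ℕ) : ℝ) + 1) ^ 2 * β)
  set v := eu (((i : ℝ) + 1) ^ 2 * β)
  have huv : ‖u - v‖ ≤ 2 * π * ((2 * i + 3) * |β|) := by
    refine (norm_eu_sub_eu_le _ _).trans_eq ?_
    have : (((i + 1 : ℕ) : ℝ) + 1) ^ 2 * β - ((i : ℝ) + 1) ^ 2 * β = (2 * i + 3) * β := by
      push_cast
      ring
    rw [this, abs_mul, abs_of_pos (by positivity)]
  have hweight : (2 * (i : ℝ) + 1) * (2 * i + 3) ≤ 4 * M ^ 2 := by nlinarith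
  have hsplit : (2 * ((i + 1 : ℕ) : ℂ) + 1) * u - (2 * (i : ℂ) + 1) * v =
      2 * u + (2 * (i : ℂ) + 1) * (u - v) := by
    push_cast
    ring
  calc _ ≤ ‖2 * u‖ + ‖(2 * (i : ℂ) + 1) * (u - v)‖ := hsplit ▸ norm_add_le _ _
    _ = 2 + (2 * i + 1) * ‖u - v‖ := by
        rw [norm_mul, norm_mul, norm_eu, norm_two_mul_natCast_add_one, Complex.norm_ofNat, mul_one]
    _ ≤ 2 + (2 * i + 1) * (2 * π * ((2 * i + 3) * |β|)) := by gcongr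
    _ = 2 + 2 * π * |β| * ((2 * i + 1) * (2 * i + 3)) := by ring
    _ ≤ 2 + 2 * π * |β| * (4 * M ^ 2) := by
        gcongr
    _ = 2 + 8 * π * |β| * M ^ 2 := by ring

lemma norm_sum_weylTerm_mul_sub_mean_le {M q : ℕ} (hM : 1 ≤ M) (hq : 0 < q) {φ : ℕ → ℂ}
    (hper : Function.Periodic φ q) (hφ : ∀ j, ‖φ j‖ ≤ 1) (β : ℝ) :
    ‖∑ j ∈ range M, (2 * (j : ℂ) + 1) * eu (((j : ℝ) + 1) ^ 2 * β) * φ j -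
        (∑ r ∈ range q, φ r) / q * weylSum M β‖ ≤ q * (8 * M + 16 * π * |β| * M ^ 3) := by
  have hqC : (q : ℂ) ≠ 0 := by exact_mod_cast hq.ne'
  set μ := (∑ r ∈ range q, φ r) / q with hμdef
  have hμ : ‖μ‖ ≤ 1 := by
    rw [hμdef, norm_div, Complex.norm_natCast, div_le_one (by exact_mod_cast hq)]
    exact (norm_sum_le_of_le _ fun j _ => hφ j).trans_eq (by simp)
  have hsum : ∑ j ∈ range q, (φ j - μ) = 0 := by
    rw [sum_sub_distrib, sum_const, card_range, nsmul_eq_mul, hμdef,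
      mul_div_cancel₀ _ hqC, sub_self]
  have hperμ : Function.Periodic (fun j => φ j - μ) q := fun j => by simp only [hper j]
  have hbound (j : ℕ) : ‖φ j - μ‖ ≤ 2 := by
    linarith [norm_sub_le (φ j) μ, hφ j]
  have hlast : ‖(2 * ((M - 1 : ℕ) : ℂ) + 1) * eu ((((M - 1 : ℕ) : ℝ) + 1) ^ 2 * β)‖ ≤ 2 * M := by
    rw [norm_mul, norm_eu, mul_one, norm_two_mul_natCast_add_one, Nat.cast_sub hM, Nat.cast_one]
    linarith
  have hparts := norm_sum_smul_le_of_norm_partial_sum_le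
    (fun j : ℕ => (2 * (j : ℂ) + 1) * eu (((j : ℝ) + 1) ^ 2 * β)) (fun j => φ j - μ) M
    (V := 2 + 8 * π * |β| * M ^ 2) (by positivity)
    (fun m _ => norm_partial_sum_le_of_periodic hq hperμ hsum hbound m) hlast
    (fun i hi => norm_weylTerm_succ_sub_le hi β)
  have hrewrite : ∑ j ∈ range M, (2 * (j : ℂ) + 1) * eu (((j : ℝ) + 1) ^ 2 * β) * φ j -
      μ * weylSum M β =
      ∑ j ∈ range M, ((2 * (j : ℂ) + 1) * eu (((j : ℝ) + 1) ^ 2 * β)) • (φ j - μ) := by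
    rw [weylSum, mul_sum, ← sum_sub_distrib]
    refine sum_congr rfl fun j _ => ?_
    rw [smul_eq_mul]
    ring
  rw [hrewrite]
  refine hparts.trans_eq ?_
  ring

lemma norm_weylSum_rat_add_le {M : ℕ} (hM : 1 ≤ M) (x : ℚ) (β : ℝ) :
    ‖weylSum M (x + β)‖ ≤
      √(2 / x.den) * ‖weylSum M β‖ + x.den * (8 * M + 16 * π * |β| * M ^ 3) := by
  have hq : (0 : ℝ) < x.den := by exact_mod_cast x.den_pos
  set φ : ℕ → ℂ := fun j => eu (((j : ℝ) + 1) ^ 2 * x) with hφ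
  have hmean : ‖(∑ r ∈ range x.den, φ r) / x.den‖ ≤ √(2 / x.den) := by
    refine Real.le_sqrt_of_sq_le ?_
    rw [norm_div, div_pow, Complex.norm_natCast, div_le_div_iff₀ (by positivity) hq]
    nlinarith [norm_sum_eu_sq_mul_rat_sq_le x]
  have hper : Function.Periodic φ x.den := by
    intro j
    have hx : (x : ℝ) * x.den = x.num := by exact_mod_cast Rat.mul_den_eq_num x
    have hshift : (((j + x.den : ℕ) : ℝ) + 1) ^ 2 * x =
        ((j : ℝ) + 1) ^ 2 * x + ((x.num * (2 * (j + 1) + x.den) : ℤ) : ℝ) := by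
      push_cast
      rw [← hx]
      ring
    simp only [hφ]
    rw [hshift, eu_add_intCast]
  have hsplit : weylSum M (x + β) =
      ∑ j ∈ range M, (2 * (j : ℂ) + 1) * eu (((j : ℝ) + 1) ^ 2 * β) * φ j := by
    refine sum_congr rfl fun j _ => ?_
    rw [mul_add, eu_add, mul_assoc, mul_comm (eu _)]
  have herr := norm_sum_weylTerm_mul_sub_mean_le hM x.den_pos hper (fun j => (norm_eu _).le) β
  rw [← hsplit] at herr
  have hmain : ‖(∑ r ∈ range x.den, φ r) / x.den * weylSum M β‖ ≤
      √(2 / x.den) * ‖weylSum M β‖ := by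
    rw [norm_mul]
    gcongr
  linarith [norm_sub_norm_le (weylSum M (x + β)) ((∑ r ∈ range x.den, φ r) / x.den * weylSum M β)]

/-! ### Weyl sums far from rationals -/

open Classical in
/-- The `h < M` for which `hθ` is within `δ` of an integer: the differences along which the Weyl sum
of frequency `θ / 2` fails to cancel. -/
noncomputable def nearIntegers (M : ℕ) (δ θ : ℝ) : Finset ℕ :=
  {h ∈ range M | ‖((h * θ : ℝ) : UnitAddCircle)‖ ≤ δ}

lemma mem_nearIntegers {M h : ℕ} {δ θ : ℝ} :
    h ∈ nearIntegers M δ θ ↔ h < M ∧ ‖((h * θ : ℝ) : UnitAddCircle)‖ ≤ δ := by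
  classical
  rw [nearIntegers, mem_filter, mem_range]

lemma sum_eu_sq_correlation (h n : ℕ) (γ : ℝ) :
    ∑ m ∈ range n, eu ((((h + m : ℕ) : ℝ) + 1) ^ 2 * γ) * conj (eu (((m : ℝ) + 1) ^ 2 * γ)) =
      eu (((h : ℝ) ^ 2 + 2 * h) * γ) * ∑ m ∈ range n, eu (h * (2 * γ)) ^ m := by
  rw [mul_sum]
  refine sum_congr rfl fun m _ => ?_
  rw [conj_eu, ← eu_nat_mul, ← eu_add, ← eu_add]
  congr 1
  push_cast
  ring

lemma norm_geom_sum_eu_le_ite_nearIntegers {M n h : ℕ} (hn : n ≤ M) (hh : h < n) {δ : ℝ}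
    (hδ : 0 < δ) (θ : ℝ) :
    ‖∑ m ∈ range (n - h), eu (h * θ) ^ m‖ ≤
      (if h ∈ nearIntegers M δ θ then (M : ℝ) else 0) + 1 / (2 * δ) := by
  split_ifs with hnear
  · have htrivial : ‖∑ m ∈ range (n - h), eu (h * θ) ^ m‖ ≤ ∑ _m ∈ range (n - h), (1 : ℝ) :=
      norm_sum_le_of_le _ fun m _ => by rw [norm_pow, norm_eu, one_pow]
    have hle : ((n - h : ℕ) : ℝ) ≤ M := by exact_mod_cast (n.sub_le h).trans hn
    have : 0 ≤ 1 / (2 * δ) := by positivity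
    rw [sum_const, card_range, nsmul_eq_mul, mul_one] at htrivial
    linarith
  · rw [mem_nearIntegers, not_and, not_le] at hnear
    have hfar := hnear (hh.trans_le hn)
    rw [zero_add, le_div_iff₀ (by positivity)]
    nlinarith [two_mul_norm_mul_norm_geom_sum_eu_le (h * θ) (n - h),
      norm_nonneg (∑ m ∈ range (n - h), eu (h * θ) ^ m)]

lemma norm_sum_eu_sq_sq_le {M n : ℕ} (hn : n ≤ M) {δ : ℝ} (hδ : 0 < δ) (γ : ℝ) :
    ‖∑ j ∈ range n, eu (((j : ℝ) + 1) ^ 2 * γ)‖ ^ 2 ≤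
      2 * #(nearIntegers M δ (2 * γ)) * M + M / δ := by
  set D := nearIntegers M δ (2 * γ)
  have hnM : (n : ℝ) ≤ M := by exact_mod_cast hn
  have hcard : (#{h ∈ range n | h ∈ D} : ℝ) ≤ #D := by
    exact_mod_cast card_le_card fun h hh => (mem_filter.1 hh).2
  refine (norm_sum_sq_le_two_mul_sum_norm_correlation _ n).trans ?_
  simp only [sum_eu_sq_correlation, norm_mul, norm_eu, one_mul]
  calc 2 * ∑ h ∈ range n, ‖∑ m ∈ range (n - h), eu (h * (2 * γ)) ^ m‖
      ≤ 2 * ∑ h ∈ range n, ((if h ∈ D then (M : ℝ) else 0) + 1 / (2 * δ)) := by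
        refine mul_le_mul_of_nonneg_left (sum_le_sum fun h hh => ?_) zero_le_two
        exact norm_geom_sum_eu_le_ite_nearIntegers hn (mem_range.1 hh) hδ _
    _ = 2 * (#{h ∈ range n | h ∈ D} * M) + n / δ := by
        rw [sum_add_distrib, ← sum_filter, sum_const, sum_const, card_range, nsmul_eq_mul,
          nsmul_eq_mul]
        field_simp
    _ ≤ 2 * (#D * M) + M / δ := by gcongr
    _ = 2 * #D * M + M / δ := by ring

lemma norm_weylSum_le_of_card_nearIntegers_le {M L : ℕ} (hM : 1 ≤ M) (hL : 1 ≤ L) {γ : ℝ}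
    (hnear : L * #(nearIntegers M (L / M) (2 * γ)) ≤ M) :
    ‖weylSum M γ‖ ≤ 7 * (M ^ 2 / √L) := by
  have : (0 : ℝ) < M := by exact_mod_cast hM
  have hLR : (0 : ℝ) < L := by exact_mod_cast hL
  have hcard : (#(nearIntegers M (L / M) (2 * γ)) : ℝ) ≤ M / L := by
    rw [le_div_iff₀ hLR, mul_comm]
    exact_mod_cast hnear
  have hpartial (m : ℕ) (hm : m ≤ M) :
      ‖∑ j ∈ range m, eu (((j : ℝ) + 1) ^ 2 * γ)‖ ≤ 7 / 4 * (M / √L) := by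
    refine le_of_sq_le_sq ?_ (by positivity)
    calc _ ≤ 2 * #(nearIntegers M (L / M) (2 * γ)) * (M : ℝ) + M / (L / M) :=
          norm_sum_eu_sq_sq_le hm (by positivity) γ
      _ ≤ 2 * (M / L) * (M : ℝ) + M / (L / M) := by gcongr
      _ = 3 * (M ^ 2 / L) := by
          field_simp
          ring
      _ ≤ (7 / 4) ^ 2 * (M ^ 2 / L) := by
          gcongr
          norm_num
      _ = _ := by rw [mul_pow, div_pow (M : ℝ), Real.sq_sqrt hLR.le]
  have hlast : ‖2 * ((M - 1 : ℕ) : ℂ) + 1‖ ≤ 2 * (M : ℝ) := by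
    rw [norm_two_mul_natCast_add_one, Nat.cast_sub hM, Nat.cast_one]
    linarith
  have hstep (i : ℕ) : ‖(2 * ((i + 1 : ℕ) : ℂ) + 1) - (2 * (i : ℂ) + 1)‖ ≤ 2 := by
    push_cast
    ring_nf
    simp
  have hparts := norm_sum_smul_le_of_norm_partial_sum_le (fun j : ℕ => 2 * (j : ℂ) + 1)
    (fun j => eu (((j : ℝ) + 1) ^ 2 * γ)) M zero_le_two hpartial hlast fun i _ => hstep i
  refine hparts.trans_eq ?_
  ring

/-! ### Rational approximation from many near integers -/

lemma exists_le_dist_lt_of_mul_lt_card {M Y t : ℕ} (hY : 0 < Y) {D : Finset ℕ}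
    (hD : D ⊆ range M) (hcard : (M / Y + 1) * t < #D) :
    ∃ a ∈ D, ∃ b ∈ D, a + t ≤ b ∧ b < a + Y := by
  obtain ⟨y, -, hy⟩ : ∃ y ∈ range (M / Y + 1), t < #{h ∈ D | h / Y = y} :=
    exists_lt_card_fiber_of_mul_lt_card_of_maps_to
      (fun h hh => mem_range_succ_iff.2 (Nat.div_le_div_right (mem_range.1 (hD hh)).le))
      (by rwa [card_range])
  set F := {h ∈ D | h / Y = y}
  have hF : F.Nonempty := card_pos.1 (by omega)
  obtain ⟨ha, hay⟩ := mem_filter.1 (F.min'_mem hF)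
  set a := F.min' hF
  obtain ⟨b, hbF, hab⟩ : ∃ b ∈ F, a + t ≤ b := by
    by_contra! hlt
    have hsub : F ⊆ Ico a (a + t) := fun b hb => mem_Ico.2 ⟨F.min'_le b hb, hlt b hb⟩
    have := card_le_card hsub
    rw [Nat.card_Ico] at this
    omega
  obtain ⟨hb, hby⟩ := mem_filter.1 hbF
  refine ⟨a, ha, b, hb, hab, ?_⟩
  have hadiv := Nat.div_add_mod a Y
  have hbdiv := Nat.div_add_mod b Y
  rw [hay] at hadiv
  rw [hby] at hbdiv
  have := Nat.mod_lt b hY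
  omega

lemma exists_norm_mul_le_of_card_nearIntegers {M Y t : ℕ} {δ θ : ℝ} (hY : 0 < Y)
    (hcard : (M / Y + 1) * t < #(nearIntegers M δ θ)) :
    ∃ k : ℕ, t ≤ k ∧ k < Y ∧ ‖((k * θ : ℝ) : UnitAddCircle)‖ ≤ 2 * δ := by
  obtain ⟨a, ha, b, hb, hab, hbY⟩ := exists_le_dist_lt_of_mul_lt_card hY
    (fun h hh => mem_range.2 (mem_nearIntegers.1 hh).1) hcard
  refine ⟨b - a, by omega, by omega, ?_⟩
  rw [Nat.cast_sub (by omega), sub_mul, AddCircle.coe_sub]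
  refine (norm_sub_le _ _).trans ?_
  linarith [(mem_nearIntegers.1 ha).2, (mem_nearIntegers.1 hb).2]

lemma mul_round_mul_eq_mul_round_mul {k l : ℕ} {θ ε : ℝ} (hkl : (k + l) * ε < 1)
    (hk : ‖((k * θ : ℝ) : UnitAddCircle)‖ ≤ ε) (hl : ‖((l * θ : ℝ) : UnitAddCircle)‖ ≤ ε) :
    (l : ℤ) * round (k * θ) = k * round (l * θ) := by
  rw [UnitAddCircle.norm_eq] at hk hl
  set u := k * θ - round (k * θ) with hu
  set v := l * θ - round (l * θ) with hv
  have hdiff : ((l * round (k * θ) - k * round (l * θ) : ℤ) : ℝ) = k * v - l * u := by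
    push_cast
    rw [hu, hv]
    ring
  have hlt : |((l * round (k * θ) - k * round (l * θ) : ℤ) : ℝ)| < 1 :=
    calc _ ≤ |k * v| + |l * u| := hdiff ▸ abs_sub _ _
      _ = k * |v| + l * |u| := by rw [abs_mul, abs_mul, Nat.abs_cast, Nat.abs_cast]
      _ ≤ k * ε + l * ε := by gcongr
      _ < 1 := by linarith
  rw [← Int.cast_abs] at hlt
  exact sub_eq_zero.1 (Int.abs_lt_one_iff.1 (by exact_mod_cast hlt))

lemma exists_rat_of_norm_mul_le {k l : ℕ} {θ ε : ℝ} (hk0 : 0 < k) (hl0 : 0 < l)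
    (hkl : (k + l) * ε < 1) (hk : ‖((k * θ : ℝ) : UnitAddCircle)‖ ≤ ε)
    (hl : ‖((l * θ : ℝ) : UnitAddCircle)‖ ≤ ε) :
    ∃ x : ℚ, x.den ≤ k ∧ |θ - x| ≤ ε / l := by
  have hkR : (k : ℝ) ≠ 0 := by exact_mod_cast hk0.ne'
  have hlR : (0 : ℝ) < l := by exact_mod_cast hl0
  have hcross : (l : ℝ) * round (k * θ) = k * round (l * θ) := by
    exact_mod_cast mul_round_mul_eq_mul_round_mul hkl hk hl
  refine ⟨(round (k * θ) : ℚ) / ((k : ℤ) : ℚ), ?_, ?_⟩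
  · exact_mod_cast Int.le_of_dvd (by exact_mod_cast hk0) (Rat.den_dvd (round (k * θ)) k)
  · have hfrac : θ - (((round (k * θ) : ℚ) / ((k : ℤ) : ℚ) : ℚ) : ℝ) =
        (l * θ - round (l * θ)) / l := by
      push_cast
      rw [sub_div, mul_div_cancel_left₀ _ hlR.ne', sub_right_inj, div_eq_div_iff hkR hlR.ne']
      linarith
    rw [UnitAddCircle.norm_eq] at hl
    rw [hfrac, abs_div, Nat.abs_cast]
    gcongr

lemma exists_short_long_norm_mul_le {M L : ℕ} (hL : 2 ≤ L) (hM : 16 * L ^ 8 ≤ M) {θ : ℝ}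
    (hnear : M < L * #(nearIntegers M (L / M) θ)) :
    ∃ k l : ℕ, (1 ≤ k ∧ k < 2 * L) ∧ (L ^ 4 ≤ l ∧ l < L ^ 6) ∧
      ‖((k * θ : ℝ) : UnitAddCircle)‖ ≤ 2 * (L / M) ∧
      ‖((l * θ : ℝ) : UnitAddCircle)‖ ≤ 2 * (L / M) := by
  have hL1 : 1 ≤ L := by omega
  have hM2L : 2 * L ≤ M := by nlinarith [pow_succ L 7, Nat.one_le_pow 7 L hL1]
  have hshort : (M / (2 * L) + 1) * 1 < #(nearIntegers M (L / M) θ) := by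
    nlinarith [Nat.mul_div_le M (2 * L)]
  have hlong : (M / L ^ 6 + 1) * L ^ 4 < #(nearIntegers M (L / M) θ) := by
    refine lt_of_mul_lt_mul_left (hnear.trans_le' ?_) L.zero_le
    have hL5 : 2 * L ^ 5 ≤ M := by
      have : L ^ 5 ≤ L ^ 8 := Nat.pow_le_pow_right hL1 (by norm_num)
      omega
    nlinarith [Nat.mul_div_le M (L ^ 6), Nat.zero_le (M / L ^ 6 * L ^ 5)]
  obtain ⟨k, hk1, hkL, hk⟩ := exists_norm_mul_le_of_card_nearIntegers (by omega) hshort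
  obtain ⟨l, hlL4, hlL6, hl⟩ := exists_norm_mul_le_of_card_nearIntegers (by positivity) hlong
  exact ⟨k, l, ⟨hk1, hkL⟩, ⟨hlL4, hlL6⟩, hk, hl⟩

/- A short difference `k < 2L` provides the denominator; a long difference `l ≥ L⁴`, at which the
same fraction is read off, provides the precision. -/
lemma exists_rat_of_lt_mul_card_nearIntegers {M L : ℕ} (hL : 2 ≤ L) (hM : 16 * L ^ 8 ≤ M) {θ : ℝ}
    (hnear : M < L * #(nearIntegers M (L / M) θ)) :
    ∃ x : ℚ, x.den ≤ 2 * L ∧ |θ - x| ≤ 2 / (L ^ 3 * M) := by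
  obtain ⟨k, l, ⟨hk1, hkL⟩, ⟨hlL4, hlL6⟩, hk, hl⟩ := exists_short_long_norm_mul_le hL hM hnear
  have hkl : ((k + l : ℕ) : ℝ) ≤ 2 * L ^ 6 := by
    have : 2 * L ≤ L ^ 6 := by nlinarith [pow_succ L 5, Nat.pow_le_pow_left hL 5]
    exact_mod_cast (by omega : k + l ≤ 2 * L ^ 6)
  have hLR : (0 : ℝ) < L := by exact_mod_cast (by omega : 0 < L)
  have hMR : 16 * (L : ℝ) ^ 8 ≤ M := by exact_mod_cast hM
  have hL2 : (2 : ℝ) ≤ L := by exact_mod_cast hL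
  have hM0 : (0 : ℝ) < M := hMR.trans_lt' (by positivity)
  have hl0 : 0 < l := (pow_pos (by omega) 4).trans_le hlL4
  have hsmall : ((k : ℝ) + l) * (2 * (L / M)) < 1 :=
    calc ((k : ℝ) + l) * (2 * (L / M)) ≤ 2 * (L : ℝ) ^ 6 * (2 * (L / M)) := by
          gcongr
          exact_mod_cast hkl
      _ = 4 * (L : ℝ) ^ 7 / M := by ring
      _ < 1 := by
          rw [div_lt_one hM0]
          nlinarith [pow_pos hLR 7, pow_succ (L : ℝ) 7]
  obtain ⟨x, hxden, hx⟩ := exists_rat_of_norm_mul_le hk1 hl0 hsmall hk hl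
  refine ⟨x, by omega, hx.trans ?_⟩
  calc 2 * (L / M) / l ≤ 2 * (L / M) / (L : ℝ) ^ 4 := by
        gcongr
        exact_mod_cast hlL4
    _ = 2 / (L ^ 3 * M) := by field_simp

/-- The rationals in `(0, 1]` of denominator at most `Q`, written `Q_{≤Q}` in the paper. -/
def fareyFinset (Q : ℕ) : Finset ℚ :=
  (Icc 1 Q).biUnion fun q => (Icc 1 q).image fun a : ℕ => (a / q : ℚ)

lemma mem_fareyFinset {Q : ℕ} {x : ℚ} : x ∈ fareyFinset Q ↔ x.den ≤ Q ∧ 0 < x ∧ x ≤ 1 := by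
  simp only [fareyFinset, mem_biUnion, mem_image, mem_Icc]
  constructor
  · rintro ⟨q, ⟨hq1, hqQ⟩, a, ⟨ha1, haq⟩, rfl⟩
    have hq : (0 : ℚ) < q := by exact_mod_cast hq1
    have : (0 : ℚ) < a := by exact_mod_cast ha1
    refine ⟨?_, by positivity, (div_le_one hq).2 (by exact_mod_cast haq)⟩
    have hden : ((a / q : ℚ).den : ℤ) ∣ q := by
      simpa only [Rat.divInt_eq_div, Int.cast_natCast] using Rat.den_dvd a q
    exact (Nat.le_of_dvd hq1 (Int.natCast_dvd_natCast.1 hden)).trans hqQ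
  · rintro ⟨hQ, h0, h1⟩
    have hnum : ((x.num.toNat : ℤ) : ℚ) = x.num := by
      rw [Int.toNat_of_nonneg (Rat.num_nonneg.2 h0.le)]
    have hle := Rat.num_le_denom_iff.2 h1
    have := Rat.num_pos.2 h0
    refine ⟨x.den, ⟨x.den_pos, hQ⟩, x.num.toNat, by omega, ?_⟩
    rw [← Int.cast_natCast, hnum, Rat.num_div_den]

lemma card_fareyFinset_le (Q : ℕ) : #(fareyFinset Q) ≤ Q ^ 2 := by
  have hfiber (q : ℕ) (hq : q ∈ Icc 1 Q) : #((Icc 1 q).image fun a : ℕ => (a / q : ℚ)) ≤ Q :=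
    card_image_le.trans (by simpa using (mem_Icc.1 hq).2)
  simpa [fareyFinset, sq] using card_biUnion_le_card_mul _ _ Q hfiber

lemma exists_mem_fareyFinset_coe_sub_eq {Q : ℕ} {x : ℚ} (hx : x.den ≤ Q) :
    ∃ y ∈ fareyFinset Q, ∀ γ : ℝ,
      ((γ - y : ℝ) : UnitAddCircle) = ((γ - x : ℝ) : UnitAddCircle) := by
  refine ⟨x - ((⌈x⌉ - 1 : ℤ) : ℚ), mem_fareyFinset.2 ⟨by rwa [Rat.sub_intCast_den], ?_, ?_⟩, ?_⟩
  · push_cast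
    linarith [Int.ceil_lt_add_one x]
  · push_cast
    linarith [Int.le_ceil x]
  · intro γ
    rw [← sub_eq_zero, ← AddCircle.coe_sub, AddCircle.coe_eq_zero_iff]
    refine ⟨⌈x⌉ - 1, ?_⟩
    push_cast
    rw [zsmul_one]
    push_cast
    ring

lemma exists_mem_fareyFinset_of_lt_mul_card_nearIntegers {M L : ℕ} (hL : 2 ≤ L)
    (hM : 16 * L ^ 8 ≤ M) {γ : ℝ} (hnear : M < L * #(nearIntegers M (L / M) (2 * γ))) :
    ∃ x ∈ fareyFinset (4 * L), ‖((γ - x : ℝ) : UnitAddCircle)‖ ≤ 1 / (L ^ 3 * M) := by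
  obtain ⟨z, hzden, hz⟩ := exists_rat_of_lt_mul_card_nearIntegers hL hM hnear
  have hden : (z / 2).den ≤ 4 * L := by
    have hdvd : (z * 2⁻¹).den ∣ z.den * 2 := by
      simpa using Rat.mul_den_dvd z 2⁻¹
    have := Nat.le_of_dvd (by have := z.den_pos; omega) hdvd
    rw [div_eq_mul_inv]
    omega
  obtain ⟨x, hx, hxz⟩ := exists_mem_fareyFinset_coe_sub_eq hden
  refine ⟨x, hx, ?_⟩
  rw [hxz]
  refine (QuotientAddGroup.norm_mk_le_norm).trans ?_
  have hhalf : γ - ((z / 2 : ℚ) : ℝ) = (2 * γ - z) / 2 := by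
    push_cast
    ring
  rw [hhalf, Real.norm_eq_abs, abs_div, abs_two, div_le_iff₀ two_pos]
  refine hz.trans_eq ?_
  ring

/-! ### The circle-method majorant -/

/-- A majorant, up to small errors, of the weighted Weyl sum at a point `β` close to `0`: the size
`min (M², 1 / |β|)` of `∫₀^{M²} e(βt) dt`, smoothed so as to be square integrable on the line. -/
noncomputable def weylMajorant (M : ℕ) (β : ℝ) : ℝ :=
  M ^ 2 * √(2 / (1 + (M ^ 2 * β) ^ 2))

lemma weylMajorant_nonneg (M : ℕ) (β : ℝ) : 0 ≤ weylMajorant M β := by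
  unfold weylMajorant
  positivity

lemma continuous_weylMajorant (M : ℕ) : Continuous (weylMajorant M) := by
  refine continuous_const.mul (continuous_const.div (by fun_prop) fun β => ?_).sqrt
  positivity

lemma weylMajorant_abs (M : ℕ) (β : ℝ) : weylMajorant M |β| = weylMajorant M β := by
  simp only [weylMajorant, mul_pow, sq_abs]

lemma weylMajorant_sq (M : ℕ) (β : ℝ) :
    weylMajorant M β ^ 2 = 2 * M ^ 4 * (1 + (M ^ 2 * β) ^ 2)⁻¹ := by
  rw [weylMajorant, mul_pow, Real.sq_sqrt (by positivity)]
  ring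

lemma sq_le_weylMajorant {M : ℕ} {β : ℝ} (hβ : M ^ 2 * |β| ≤ 1) : M ^ 2 ≤ weylMajorant M β := by
  refine le_mul_of_one_le_right (by positivity) ?_
  rw [Real.one_le_sqrt, one_le_div (by positivity), mul_pow, ← sq_abs β, ← mul_pow]
  have : (M ^ 2 * |β|) ^ 2 ≤ 1 := pow_le_one₀ (by positivity) hβ
  linarith

lemma inv_abs_le_weylMajorant {M : ℕ} {β : ℝ} (hβ : 1 ≤ M ^ 2 * |β|) :
    |β|⁻¹ ≤ weylMajorant M β := by
  have hβ0 : 0 < |β| := (abs_nonneg β).lt_of_ne (by rintro h; norm_num [← h] at hβ)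
  refine le_of_sq_le_sq ?_ (weylMajorant_nonneg M β)
  rw [weylMajorant_sq, inv_pow, ← div_eq_mul_inv, inv_eq_one_div,
    div_le_div_iff₀ (by positivity) (by positivity), mul_pow, ← sq_abs β]
  have : 1 ≤ (M ^ 2 * |β|) ^ 2 := one_le_pow₀ hβ
  linarith

lemma norm_weylSum_le_inv_add {M : ℕ} {β : ℝ} (hβ0 : β ≠ 0) (hβ : 4 * π * M * |β| ≤ 1) :
    ‖weylSum M β‖ ≤ |β|⁻¹ + 26 * |β| * M ^ 3 := by
  have : 0 < |β| := abs_pos.2 hβ0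
  have : 0 < π := Real.pi_pos
  calc ‖weylSum M β‖ ≤ (2 + 16 * π ^ 2 * β ^ 2 * M ^ 3) / (2 * π * |β|) := by
        rw [le_div_iff₀ (by positivity), mul_comm]
        exact two_pi_mul_abs_mul_norm_weylSum_le hβ
    _ = π⁻¹ * |β|⁻¹ + 8 * π * |β| * M ^ 3 := by
        rw [← sq_abs β]
        field_simp
        ring
    _ ≤ 1 * |β|⁻¹ + 26 * |β| * M ^ 3 := by
        have : π⁻¹ ≤ 1 := inv_le_one_of_one_le₀ (by linarith [Real.pi_gt_three])
        have : 8 * π ≤ 26 := by linarith [Real.pi_lt_d2]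
        gcongr
    _ = |β|⁻¹ + 26 * |β| * M ^ 3 := by rw [one_mul]

lemma norm_weylSum_le_weylMajorant_add {M : ℕ} {β : ℝ} (hβ : 4 * π * M * |β| ≤ 1) :
    ‖weylSum M β‖ ≤ weylMajorant M β + 26 * |β| * M ^ 3 := by
  rcases le_or_gt (M ^ 2 * |β|) 1 with h | h
  · have : 0 ≤ 26 * |β| * M ^ 3 := by positivity
    linarith [norm_weylSum_le M β, sq_le_weylMajorant h]
  · have hβ0 : β ≠ 0 := by
      rintro rfl
      norm_num at h
    linarith [norm_weylSum_le_inv_add hβ0 hβ, inv_abs_le_weylMajorant h.le]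

/-- The majorant of the weighted Weyl sum on the major arc around `x`; the factor `√(2 / x.den)`
bounds the normalised quadratic Gauss sum. -/
noncomputable def arcMajorant (M : ℕ) (x : ℚ) (γ : ℝ) : ℝ :=
  √(2 / x.den) * weylMajorant M ‖((γ - x : ℝ) : UnitAddCircle)‖

lemma arcMajorant_nonneg (M : ℕ) (x : ℚ) (γ : ℝ) : 0 ≤ arcMajorant M x γ :=
  mul_nonneg (Real.sqrt_nonneg _) (weylMajorant_nonneg _ _)

lemma continuous_norm_coe_sub (x : ℝ) :
    Continuous fun γ : ℝ => ‖((γ - x : ℝ) : UnitAddCircle)‖ :=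
  continuous_norm.comp ((AddCircle.continuous_mk' 1).comp (continuous_id.sub continuous_const))

lemma continuous_arcMajorant (M : ℕ) (x : ℚ) : Continuous (arcMajorant M x) :=
  continuous_const.mul ((continuous_weylMajorant M).comp (continuous_norm_coe_sub x))

lemma arcMajorant_le_of_le_mul_norm {M L : ℕ} {x : ℚ} {γ : ℝ} (hL : 1 ≤ L) (hx : x.den ≤ 4 * L)
    (hγ : L ≤ x.den * (M ^ 2 * ‖((γ - x : ℝ) : UnitAddCircle)‖)) :
    arcMajorant M x γ ≤ 4 * (M ^ 2 / √L) := by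
  set y := M ^ 2 * ‖((γ - x : ℝ) : UnitAddCircle)‖ with hy
  have hL0 : (0 : ℝ) < L := by exact_mod_cast hL
  have : (0 : ℝ) < x.den := by exact_mod_cast x.den_pos
  have hLy : L ≤ 4 * (x.den * (1 + y ^ 2)) := by
    refine le_of_mul_le_mul_left ?_ hL0
    calc (L : ℝ) * L ≤ (x.den * y) * (x.den * y) := by gcongr
      _ = x.den * (x.den * y ^ 2) := by ring
      _ ≤ (4 * L) * (x.den * (1 + y ^ 2)) := by
          have : (x.den : ℝ) ≤ 4 * L := by exact_mod_cast hx
          gcongr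
          linarith
      _ = L * (4 * (x.den * (1 + y ^ 2))) := by ring
  refine le_of_sq_le_sq ?_ (by positivity)
  calc arcMajorant M x γ ^ 2 = 4 * (M : ℝ) ^ 4 / (x.den * (1 + y ^ 2)) := by
        rw [arcMajorant, mul_pow, Real.sq_sqrt (by positivity), weylMajorant_sq, ← hy]
        field_simp
        ring
    _ ≤ 16 * (M : ℝ) ^ 4 / L := by
        rw [div_le_div_iff₀ (by positivity) hL0]
        linarith [mul_le_mul_of_nonneg_left hLy (by positivity : (0 : ℝ) ≤ 4 * M ^ 4)]
    _ = (4 * (M ^ 2 / √L)) ^ 2 := by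
        rw [mul_pow, div_pow, Real.sq_sqrt hL0.le]
        ring

lemma den_mul_error_le {M L q : ℕ} {β : ℝ} (hL : 204 ≤ L) (hM : 32 * L ^ 2 ≤ M) (hq : q ≤ 4 * L)
    (hβ : |β| * (L ^ 3 * M) ≤ 1) :
    q * (8 * M + 16 * π * |β| * M ^ 3) ≤ 2 * (M ^ 2 / L) := by
  have hL' : (204 : ℝ) ≤ L := by exact_mod_cast hL
  have hM' : 32 * (L : ℝ) ^ 2 ≤ M := by exact_mod_cast hM
  have hq' : (q : ℝ) ≤ 4 * L := by exact_mod_cast hq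
  have hL0 : (0 : ℝ) < L := by linarith
  have hpi : 16 * π ≤ 51 := by linarith [Real.pi_lt_d2]
  rw [mul_div_assoc', le_div_iff₀ hL0]
  calc q * (8 * M + 16 * π * |β| * M ^ 3) * L ≤ 4 * L * (8 * M + 51 * |β| * M ^ 3) * L := by
        gcongr
    _ = 32 * L ^ 2 * M + 204 * (|β| * (L ^ 2 * M)) * M ^ 2 := by ring
    _ ≤ M * M + L * (|β| * (L ^ 2 * M)) * M ^ 2 := by gcongr
    _ = M ^ 2 + |β| * (L ^ 3 * M) * M ^ 2 := by ring
    _ ≤ M ^ 2 + 1 * M ^ 2 := by gcongr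
    _ = 2 * M ^ 2 := by ring

lemma norm_weylSum_le_arcMajorant_add {M L : ℕ} {x : ℚ} {γ : ℝ} (hL : 204 ≤ L)
    (hM : 32 * L ^ 2 ≤ M) (hx : x.den ≤ 4 * L)
    (hγ : ‖((γ - x : ℝ) : UnitAddCircle)‖ ≤ 1 / (L ^ 3 * M)) :
    ‖weylSum M γ‖ ≤ arcMajorant M x γ + 4 * (M ^ 2 / L) := by
  have hL' : (204 : ℝ) ≤ L := by exact_mod_cast hL
  have hL0 : (0 : ℝ) < L := by linarith
  have hM1 : 1 ≤ M := by nlinarith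
  have : (0 : ℝ) < M := by exact_mod_cast hM1
  set β := γ - x - round (γ - x) with hβ_def
  have hnorm : ‖((γ - x : ℝ) : UnitAddCircle)‖ = |β| := UnitAddCircle.norm_eq
  have hβ : |β| * (L ^ 3 * M) ≤ 1 := by rwa [hnorm, le_div_iff₀ (by positivity)] at hγ
  have hpiβ : 4 * π * M * |β| ≤ 1 := by
    have hpi : 4 * π ≤ L ^ 3 := by nlinarith [Real.pi_lt_d2, pow_le_pow_left₀ (by norm_num) hL' 3]
    calc 4 * π * M * |β| ≤ L ^ 3 * M * |β| := by gcongr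
      _ ≤ 1 := by linarith
  have herror : 26 * |β| * M ^ 3 ≤ M ^ 2 / L := by
    rw [le_div_iff₀ hL0]
    calc 26 * |β| * M ^ 3 * L = 26 * |β| * L * M * M ^ 2 := by ring
      _ ≤ (L ^ 2) * |β| * L * M * M ^ 2 := by
          gcongr
          nlinarith
      _ = |β| * (L ^ 3 * M) * M ^ 2 := by ring
      _ ≤ M ^ 2 := mul_le_of_le_one_left (by positivity) hβ
  have hsqrt : √(2 / x.den) ≤ 2 := by
    have hq : (1 : ℝ) ≤ x.den := by exact_mod_cast x.den_pos
    rw [Real.sqrt_le_left zero_le_two, div_le_iff₀ (by linarith)]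
    linarith
  have hshift : weylSum M γ = weylSum M (x + β) := by
    rw [← weylSum_add_intCast M (x + β) (round (γ - x)), hβ_def]
    ring_nf
  have hmajorant : arcMajorant M x γ = √(2 / x.den) * weylMajorant M β := by
    rw [arcMajorant, hnorm, weylMajorant_abs]
  calc ‖weylSum M γ‖ ≤ √(2 / x.den) * ‖weylSum M β‖ + 2 * (M ^ 2 / L) := by
        rw [hshift]
        linarith [norm_weylSum_rat_add_le hM1 x β, den_mul_error_le hL hM hx hβ]
    _ ≤ √(2 / x.den) * (weylMajorant M β + M ^ 2 / L) + 2 * (M ^ 2 / L) := by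
        gcongr
        linarith [norm_weylSum_le_weylMajorant_add hpiβ]
    _ = arcMajorant M x γ + √(2 / x.den) * (M ^ 2 / L) + 2 * (M ^ 2 / L) := by
        rw [hmajorant]
        ring
    _ ≤ arcMajorant M x γ + 4 * (M ^ 2 / L) := by
        have : √(2 / x.den) * (M ^ 2 / L) ≤ 2 * (M ^ 2 / L) := by gcongr
        linarith

lemma mem_majorArcQ {x : ℚ} {N : ℕ} {K γ : ℝ} :
    γ ∈ majorArcQ x N K ↔
      γ ∈ Set.Ioc (0 : ℝ) 1 ∧ ‖((γ - x : ℝ) : UnitAddCircle)‖ ≤ K / (x.den * N) := by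
  rw [UnitAddCircle.norm_eq]
  rfl

lemma norm_weylSum_le_add_sum_indicator {M L N : ℕ} (hL : 204 ≤ L) (hM : 16 * L ^ 8 ≤ M)
    (hN0 : 0 < N) (hN : N ≤ 9 * M ^ 2) {γ : ℝ} (hγ : γ ∈ Set.Ioc (0 : ℝ) 1) :
    ‖weylSum M γ‖ ≤ 8 * (M ^ 2 / √L) +
      ∑ x ∈ fareyFinset (4 * L), (majorArcQ x N (9 * L)).indicator (arcMajorant M x) γ := by
  have hL1 : (1 : ℝ) ≤ L := by exact_mod_cast (by omega : 1 ≤ L)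
  have hM2 : 32 * L ^ 2 ≤ M := by
    have : 2 ≤ L ^ 6 := (by omega : 2 ≤ L).trans (Nat.le_self_pow (by norm_num) L)
    nlinarith [sq_nonneg L]
  have hterm (x : ℚ) : 0 ≤ (majorArcQ x N (9 * L)).indicator (arcMajorant M x) γ :=
    Set.indicator_nonneg (fun t _ => arcMajorant_nonneg M x t) γ
  have hsum := sum_nonneg fun x (_ : x ∈ fareyFinset (4 * L)) => hterm x
  have hE : 0 ≤ M ^ 2 / √L := by positivity
  rcases le_or_gt (L * #(nearIntegers M (L / M) (2 * γ))) M with hminor | hmajor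
  · linarith [norm_weylSum_le_of_card_nearIntegers_le (by nlinarith) (by omega) hminor]
  obtain ⟨x, hx, hγx⟩ := exists_mem_fareyFinset_of_lt_mul_card_nearIntegers (by omega) hM hmajor
  have hxL : x.den ≤ 4 * L := (mem_fareyFinset.1 hx).1
  have hweyl : ‖weylSum M γ‖ ≤ arcMajorant M x γ + 4 * (M ^ 2 / √L) := by
    have : M ^ 2 / (L : ℝ) ≤ M ^ 2 / √L := by
      gcongr
      exact (Real.sqrt_le_left (by linarith)).2 (by nlinarith)
    linarith [norm_weylSum_le_arcMajorant_add hL hM2 hxL hγx]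
  by_cases harc : γ ∈ majorArcQ x N (9 * L)
  · have hsingle := single_le_sum (fun x _ => hterm x) hx
    rw [Set.indicator_of_mem harc] at hsingle
    linarith
  · have hfar : L ≤ x.den * (M ^ 2 * ‖((γ - x : ℝ) : UnitAddCircle)‖) := by
      have hlt := not_le.1 fun h => harc (mem_majorArcQ.2 ⟨hγ, h⟩)
      have hden : (0 : ℝ) < x.den * N := by exact_mod_cast Nat.mul_pos x.den_pos hN0
      have hN9 : (N : ℝ) ≤ 9 * M ^ 2 := by exact_mod_cast hN
      have hmul : ‖((γ - x : ℝ) : UnitAddCircle)‖ * (x.den * N) ≤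
          ‖((γ - x : ℝ) : UnitAddCircle)‖ * (x.den * (9 * M ^ 2)) := by gcongr
      rw [div_lt_iff₀ hden] at hlt
      linarith
    linarith [arcMajorant_le_of_le_mul_norm (by omega) hxL hfar]

/-! ### Orthogonality and Parseval -/

lemma continuous_hatInd (A : Finset ℕ) : Continuous (hatInd A) :=
  continuous_finsetSum _ fun _ _ => continuous_eu.comp (continuous_const.mul continuous_id)

lemma norm_hatInd_le (A : Finset ℕ) (γ : ℝ) : ‖hatInd A γ‖ ≤ #A :=
  (norm_sum_le _ _).trans_eq (by simp only [norm_eu, sum_const, nsmul_one])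

lemma integral_eu_intCast_mul (k : ℤ) :
    ∫ γ in Set.Ioc (0 : ℝ) 1, eu (k * γ) = if k = 0 then 1 else 0 := by
  split_ifs with hk
  · simp [hk, eu_zero]
  · have hexp (γ : ℝ) : eu (k * γ) = Complex.exp (2 * π * Complex.I * k * γ) := by
      rw [eu]
      push_cast
      ring_nf
    have hne : 2 * π * Complex.I * k ≠ 0 := by simp [hk, Real.pi_ne_zero]
    have hperiod : eu (k * 1) = 1 := by rw [mul_one, eu_intCast]
    simp_rw [← intervalIntegral.integral_of_le zero_le_one, hexp]
    rw [integral_exp_mul_complex hne, ← hexp, ← hexp, hperiod, mul_zero, eu_zero, sub_self,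
      zero_div]

/-- The number of pairs `(a, t) ∈ A × T` with difference `t - a = k`. -/
def diffCount (A T : Finset ℕ) (k : ℤ) : ℕ :=
  #{p ∈ A ×ˢ T | (p.2 : ℤ) - p.1 = k}

lemma integral_hatInd_mul_conj_hatInd_mul_eu (A T : Finset ℕ) (k : ℤ) :
    ∫ γ in Set.Ioc (0 : ℝ) 1, hatInd A γ * conj (hatInd T γ) * eu (k * γ) = diffCount A T k := by
  have hexpand (γ : ℝ) : hatInd A γ * conj (hatInd T γ) * eu (k * γ) =
      ∑ p ∈ A ×ˢ T, eu ((k - ((p.2 : ℤ) - p.1) : ℤ) * γ) := by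
    rw [hatInd, hatInd, map_sum, sum_mul_sum, ← sum_product', sum_mul]
    refine sum_congr rfl fun p _ => ?_
    rw [conj_eu, ← eu_add, ← eu_add]
    push_cast
    ring_nf
  have hint (p : ℕ × ℕ) :
      IntegrableOn (fun γ : ℝ => eu ((k - ((p.2 : ℤ) - p.1) : ℤ) * γ)) (Set.Ioc 0 1) :=
    (continuous_eu.comp (continuous_const.mul continuous_id)).integrableOn_Ioc
  simp_rw [hexpand]
  rw [integral_finsetSum _ fun p _ => hint p, diffCount, card_filter, Nat.cast_sum]
  refine sum_congr rfl fun p _ => ?_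
  rw [integral_eu_intCast_mul, Nat.cast_ite, Nat.cast_one, Nat.cast_zero]
  exact if_congr (by omega) rfl rfl

lemma diffCount_zero (A T : Finset ℕ) : diffCount A T 0 = #(A ∩ T) := by
  refine card_nbij' Prod.fst (fun a => (a, a)) ?_ ?_ ?_ ?_ <;> intro p hp <;>
    simp only [coe_filter, mem_product, coe_inter, Set.mem_ofPred_eq, Set.mem_inter_iff,
      mem_coe] at hp ⊢ <;> grind

lemma integral_norm_hatInd_sq (A : Finset ℕ) :
    ∫ γ in Set.Ioc (0 : ℝ) 1, ‖hatInd A γ‖ ^ 2 = #A := by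
  have h := integral_hatInd_mul_conj_hatInd_mul_eu A A 0
  simp_rw [Complex.mul_conj', Int.cast_zero, zero_mul, eu_zero, mul_one, ← Complex.ofReal_pow] at h
  rw [diffCount_zero, inter_self, integral_complex_ofReal] at h
  exact_mod_cast h

/-- The Fourier transform of the balanced function `1_A - α 1_{[N]}`. -/
noncomputable def hatBal (A : Finset ℕ) (N : ℕ) (α γ : ℝ) : ℂ :=
  hatInd A γ - α * hatInd (Icc 1 N) γ

lemma continuous_hatBal (A : Finset ℕ) (N : ℕ) (α : ℝ) : Continuous (hatBal A N α) :=
  (continuous_hatInd A).sub (continuous_const.mul (continuous_hatInd _))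

lemma integral_hatBal_mul_conj_hatInd_mul_eu (A T : Finset ℕ) (N : ℕ) (α : ℝ) (k : ℤ) :
    ∫ γ in Set.Ioc (0 : ℝ) 1, hatBal A N α γ * conj (hatInd T γ) * eu (k * γ) =
      diffCount A T k - α * diffCount (Icc 1 N) T k := by
  have hint (S : Finset ℕ) :
      IntegrableOn (fun γ => hatInd S γ * conj (hatInd T γ) * eu (k * γ)) (Set.Ioc 0 1) :=
    (((continuous_hatInd S).mul (Complex.continuous_conj.comp (continuous_hatInd T))).mul
      (continuous_eu.comp (continuous_const.mul continuous_id))).integrableOn_Ioc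
  simp_rw [hatBal, sub_mul, mul_assoc (α : ℂ)]
  rw [integral_sub (hint A) ((hint _).const_mul _), integral_const_mul,
    integral_hatInd_mul_conj_hatInd_mul_eu, integral_hatInd_mul_conj_hatInd_mul_eu]

lemma integral_norm_hatBal_sq {A : Finset ℕ} {N : ℕ} (hA : A ⊆ Icc 1 N) {α : ℝ}
    (hα : α * N = #A) :
    ∫ γ in Set.Ioc (0 : ℝ) 1, ‖hatBal A N α γ‖ ^ 2 = #A * (1 - α) := by
  have hsplit (γ : ℝ) : ((‖hatBal A N α γ‖ ^ 2 : ℝ) : ℂ) =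
      hatBal A N α γ * conj (hatInd A γ) * eu ((0 : ℤ) * γ) -
        α * (hatBal A N α γ * conj (hatInd (Icc 1 N) γ) * eu ((0 : ℤ) * γ)) := by
    rw [Complex.ofReal_pow, ← Complex.mul_conj', Int.cast_zero, zero_mul, eu_zero]
    nth_rw 2 [hatBal]
    rw [map_sub, map_mul, Complex.conj_ofReal]
    ring
  have hint (T : Finset ℕ) :
      IntegrableOn (fun γ => hatBal A N α γ * conj (hatInd T γ) * eu ((0 : ℤ) * γ))
        (Set.Ioc 0 1) :=
    (((continuous_hatBal A N α).mul (Complex.continuous_conj.comp (continuous_hatInd T))).mul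
      (continuous_eu.comp (continuous_const.mul continuous_id))).integrableOn_Ioc
  have h := integral_complex_ofReal (μ := volume.restrict (Set.Ioc (0 : ℝ) 1))
    (f := fun γ => ‖hatBal A N α γ‖ ^ 2)
  simp_rw [hsplit] at h
  rw [integral_sub (hint A) ((hint _).const_mul _), integral_const_mul,
    integral_hatBal_mul_conj_hatInd_mul_eu, integral_hatBal_mul_conj_hatInd_mul_eu,
    diffCount_zero, diffCount_zero, diffCount_zero, diffCount_zero, inter_self, inter_self,
    inter_eq_left.2 hA, inter_eq_right.2 hA, Nat.card_Icc, Nat.add_sub_cancel] at h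
  have hreal : (#A - α * #A) - α * (#A - α * N) =
      ∫ γ in Set.Ioc (0 : ℝ) 1, ‖hatBal A N α γ‖ ^ 2 := by exact_mod_cast h
  rw [← hreal, hα]
  ring

/-! ### Testing the balanced function against the squares -/

lemma NoSquareDiff.diffCount_sq {A : Finset ℕ} (hS : NoSquareDiff A) {n : ℕ} (hn : 0 < n) :
    diffCount A A ((n : ℤ) ^ 2) = 0 := by
  refine card_eq_zero.2 (filter_eq_empty_iff.2 fun p hp hdiff => ?_)
  rw [mem_product] at hp
  exact hS p.2 hp.2 p.1 hp.1 n hn (by zify; linarith)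

lemma NoSquareDiff.diffCount_neg_sq {A : Finset ℕ} (hS : NoSquareDiff A) {n : ℕ} (hn : 0 < n) :
    diffCount A A (-(n : ℤ) ^ 2) = 0 := by
  refine card_eq_zero.2 (filter_eq_empty_iff.2 fun p hp hdiff => ?_)
  rw [mem_product] at hp
  exact hS p.1 hp.1 p.2 hp.2 n hn (by zify; linarith)

lemma card_le_diffCount_Icc_add {A : Finset ℕ} {N k : ℕ} (hA : A ⊆ Icc 1 N) (hk : 2 * k ≤ N) :
    #A ≤ diffCount (Icc 1 N) A k + diffCount (Icc 1 N) A (-k) := by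
  rw [← card_filter_add_card_filter_not (s := A) (fun a => k < a), diffCount, diffCount]
  refine Nat.add_le_add
    (card_le_card_of_injOn (fun a => (a - k, a)) (fun a ha => ?_) fun _ _ _ _ => congrArg Prod.snd)
    (card_le_card_of_injOn (fun a => (a + k, a)) (fun a ha => ?_) fun _ _ _ _ => congrArg Prod.snd)
  all_goals
    obtain ⟨haA, hak⟩ := mem_filter.1 ha
    have := mem_Icc.1 (hA haA)
    simp only [coe_filter, mem_product, mem_Icc, Set.mem_ofPred_eq]
    grind

lemma integral_hatBal_mul_conj_hatInd_mul_weylSum {A : Finset ℕ} (hS : NoSquareDiff A) (N M : ℕ)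
    (α : ℝ) :
    ∫ γ in Set.Ioc (0 : ℝ) 1,
        hatBal A N α γ * conj (hatInd A γ) * (weylSum M γ + conj (weylSum M γ)) =
      ((-α * ∑ j ∈ range M, (2 * (j : ℝ) + 1) *
        (diffCount (Icc 1 N) A ((j + 1 : ℕ) ^ 2) + diffCount (Icc 1 N) A (-(j + 1 : ℕ) ^ 2)) : ℝ) :
          ℂ) := by
  set F : ℤ → ℝ → ℂ := fun k γ => hatBal A N α γ * conj (hatInd A γ) * eu (k * γ) with hF
  have hint (k : ℤ) : IntegrableOn (F k) (Set.Ioc 0 1) :=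
    (((continuous_hatBal A N α).mul (Complex.continuous_conj.comp (continuous_hatInd A))).mul
      (continuous_eu.comp (continuous_const.mul continuous_id))).integrableOn_Ioc
  have hexpand (γ : ℝ) :
      hatBal A N α γ * conj (hatInd A γ) * (weylSum M γ + conj (weylSum M γ)) =
        ∑ j ∈ range M, (2 * j + 1 : ℂ) * (F ((j + 1 : ℕ) ^ 2) γ + F (-(j + 1 : ℕ) ^ 2) γ) := by
    rw [weylSum, map_sum, ← sum_add_distrib, mul_sum]
    refine sum_congr rfl fun j _ => ?_
    simp only [hF, map_mul, map_add, map_one, map_ofNat, Complex.conj_natCast, conj_eu]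
    push_cast
    rw [neg_mul]
    ring
  have hterm (j : ℕ) :
      IntegrableOn (fun γ => (2 * j + 1 : ℂ) * (F ((j + 1 : ℕ) ^ 2) γ + F (-(j + 1 : ℕ) ^ 2) γ))
        (Set.Ioc 0 1) :=
    ((hint _).add (hint _)).const_mul _
  simp_rw [hexpand]
  rw [integral_finsetSum _ fun j _ => hterm j, mul_sum,
    Complex.ofReal_sum]
  refine sum_congr rfl fun j _ => ?_
  rw [integral_const_mul, integral_add (hint _) (hint _), integral_hatBal_mul_conj_hatInd_mul_eu,
    integral_hatBal_mul_conj_hatInd_mul_eu, hS.diffCount_sq j.succ_pos,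
    hS.diffCount_neg_sq j.succ_pos]
  push_cast
  ring

lemma le_integral_norm_hatBal_mul_norm_weylSum {A : Finset ℕ} {N M : ℕ} (hA : A ⊆ Icc 1 N)
    (hS : NoSquareDiff A) {α : ℝ} (hα : 0 ≤ α) (hM : 2 * M ^ 2 ≤ N) :
    α * #A * M ^ 2 / 2 ≤
      ∫ γ in Set.Ioc (0 : ℝ) 1, ‖hatBal A N α γ‖ * ‖hatInd A γ‖ * ‖weylSum M γ‖ := by
  set d : ℕ → ℝ := fun j =>
    diffCount (Icc 1 N) A ((j + 1 : ℕ) ^ 2) + diffCount (Icc 1 N) A (-(j + 1 : ℕ) ^ 2)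
  have hd : ∀ j ∈ range M, (#A : ℝ) ≤ d j := fun j hj => by
    simp only [d]
    have hj : (j + 1) ^ 2 ≤ M ^ 2 := Nat.pow_le_pow_left (mem_range.1 hj) 2
    exact_mod_cast card_le_diffCount_Icc_add (k := (j + 1) ^ 2) hA (by omega)
  have hsum : #A * (M : ℝ) ^ 2 ≤ ∑ j ∈ range M, (2 * j + 1) * d j := by
    rw [← sum_range_two_mul_add_one, mul_comm, sum_mul]
    exact sum_le_sum fun j hj => mul_le_mul_of_nonneg_left (hd j hj) (by positivity)
  have hpointwise (γ : ℝ) :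
      ‖hatBal A N α γ * conj (hatInd A γ) * (weylSum M γ + conj (weylSum M γ))‖ ≤
        2 * (‖hatBal A N α γ‖ * ‖hatInd A γ‖ * ‖weylSum M γ‖) := by
    have hre : ‖weylSum M γ + conj (weylSum M γ)‖ ≤ 2 * ‖weylSum M γ‖ := by
      refine (norm_add_le _ _).trans_eq ?_
      rw [RCLike.norm_conj, two_mul]
    rw [norm_mul, norm_mul, RCLike.norm_conj, mul_left_comm]
    gcongr
  have hint : IntegrableOn (fun γ => 2 * (‖hatBal A N α γ‖ * ‖hatInd A γ‖ * ‖weylSum M γ‖))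
      (Set.Ioc 0 1) :=
    (continuous_const.mul (((continuous_hatBal A N α).norm.mul (continuous_hatInd A).norm).mul
      (continuous_weylSum M).norm)).integrableOn_Ioc
  have hle := norm_integral_le_of_norm_le hint (.of_forall hpointwise)
  rw [integral_hatBal_mul_conj_hatInd_mul_weylSum hS, Complex.norm_real, integral_const_mul,
    Real.norm_eq_abs, abs_mul, abs_neg, abs_of_nonneg hα] at hle
  have := mul_le_mul_of_nonneg_left (hsum.trans (le_abs_self _)) hα
  linarith

/-! ### Energies of the major arcs -/

lemma integrableOn_of_continuous_of_isBounded {f : ℝ → ℝ} (hf : Continuous f) {s : Set ℝ}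
    (hs : Bornology.IsBounded s) : IntegrableOn f s :=
  (hf.locallyIntegrable.integrableOn_isCompact hs.isCompact_closure).mono_set subset_closure

lemma setIntegral_mul_le_sqrt_mul_sqrt {f g : ℝ → ℝ} (hf : Continuous f) (hg : Continuous g)
    (hf0 : 0 ≤ f) (hg0 : 0 ≤ g) {s : Set ℝ} (hs : Bornology.IsBounded s) :
    ∫ t in s, f t * g t ≤ √(∫ t in s, f t ^ 2) * √(∫ t in s, g t ^ 2) := by
  have hmem {h : ℝ → ℝ} (hh : Continuous h) : MemLp h 2 (volume.restrict s) :=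
    (memLp_two_iff_integrable_sq hh.aestronglyMeasurable).2
      (integrableOn_of_continuous_of_isBounded (hh.pow 2) hs)
  have h := integral_mul_le_Lp_mul_Lq_of_nonneg Real.HolderConjugate.two_two (.of_forall hf0)
    (.of_forall hg0) (by simpa using hmem hf) (by simpa using hmem hg)
  simpa [Real.sqrt_eq_rpow] using h

lemma integral_norm_hatBal_mul_norm_hatInd_le {A : Finset ℕ} {N : ℕ} (hA : A ⊆ Icc 1 N) {α : ℝ}
    (hα0 : 0 ≤ α) (hα : α * N = #A) :
    ∫ γ in Set.Ioc (0 : ℝ) 1, ‖hatBal A N α γ‖ * ‖hatInd A γ‖ ≤ #A := by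
  refine (setIntegral_mul_le_sqrt_mul_sqrt (continuous_hatBal A N α).norm
    (continuous_hatInd A).norm (fun _ => norm_nonneg _) (fun _ => norm_nonneg _)
    (Metric.isBounded_Ioc 0 1)).trans ?_
  rw [integral_norm_hatBal_sq hA hα, integral_norm_hatInd_sq]
  calc √(#A * (1 - α)) * √(#A) ≤ √(#A) * √(#A) := by
        gcongr
        exact mul_le_of_le_one_right (Nat.cast_nonneg _) (by linarith)
    _ = #A := Real.mul_self_sqrt (Nat.cast_nonneg _)

lemma norm_coe_add_one (t : ℝ) :
    ‖((t + 1 : ℝ) : UnitAddCircle)‖ = ‖(t : UnitAddCircle)‖ :=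
  congrArg norm (AddCircle.coe_add_period 1 t)

lemma integral_comp_norm_sub_le {w : ℝ → ℝ} (hw0 : ∀ t, 0 ≤ w t) (hw : Integrable fun t => w |t|)
    (x : ℝ) :
    ∫ γ in Set.Ioc (0 : ℝ) 1, w ‖((γ - x : ℝ) : UnitAddCircle)‖ ≤ ∫ t, w |t| := by
  have hperiodic : Function.Periodic (fun γ : ℝ => w ‖((γ - x : ℝ) : UnitAddCircle)‖) 1 :=
    fun γ => by simp only [add_sub_right_comm, norm_coe_add_one]
  have hshift := hperiodic.intervalIntegral_add_eq 0 (x - 1 / 2)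
  rw [zero_add, intervalIntegral.integral_of_le zero_le_one,
    intervalIntegral.integral_of_le (by linarith)] at hshift
  calc ∫ γ in Set.Ioc (0 : ℝ) 1, w ‖((γ - x : ℝ) : UnitAddCircle)‖
      = ∫ γ in Set.Ioc (x - 1 / 2) (x - 1 / 2 + 1), w |γ - x| := by
        rw [hshift]
        refine setIntegral_congr_fun measurableSet_Ioc fun γ hγ => ?_
        have hhalf : |γ - x| ≤ |(1 : ℝ)| / 2 := by
          rw [abs_one, abs_le]
          constructor <;> linarith [hγ.1, hγ.2]
        simp only [(AddCircle.norm_coe_eq_abs_iff 1 one_ne_zero).2 hhalf]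
    _ ≤ ∫ γ, w |γ - x| :=
        setIntegral_le_integral (hw.comp_sub_right x) (.of_forall fun _ => hw0 _)
    _ = ∫ t, w |t| := integral_sub_right_eq_self (fun t => w |t|) x

lemma integrable_weylMajorant_sq {M : ℕ} (hM : 0 < M) :
    Integrable fun t => weylMajorant M t ^ 2 := by
  simp_rw [weylMajorant_sq]
  exact (integrable_inv_one_add_sq.comp_mul_left' (by positivity)).const_mul _

lemma integral_weylMajorant_sq {M : ℕ} (hM : 0 < M) :
    ∫ t, weylMajorant M t ^ 2 = 2 * π * M ^ 2 := by
  simp_rw [weylMajorant_sq]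
  rw [integral_const_mul, Measure.integral_comp_mul_left (fun t : ℝ => (1 + t ^ 2)⁻¹),
    integral_univ_inv_one_add_sq, abs_of_pos (by positivity), smul_eq_mul]
  field_simp

lemma sqrt_integral_arcMajorant_sq_le {M : ℕ} (hM : 0 < M) (x : ℚ) :
    √(∫ γ in Set.Ioc (0 : ℝ) 1, arcMajorant M x γ ^ 2) ≤ 4 * M / √x.den := by
  have hle := integral_comp_norm_sub_le (w := fun t => weylMajorant M t ^ 2)
    (fun _ => sq_nonneg _) (by simpa only [weylMajorant_abs] using integrable_weylMajorant_sq hM) x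
  simp only [weylMajorant_abs] at hle
  rw [integral_weylMajorant_sq hM] at hle
  rw [Real.sqrt_le_left (by positivity), div_pow, Real.sq_sqrt (Nat.cast_nonneg _)]
  simp_rw [arcMajorant, mul_pow, Real.sq_sqrt (by positivity : (0 : ℝ) ≤ 2 / x.den)]
  rw [integral_const_mul]
  calc 2 / x.den * ∫ γ in Set.Ioc (0 : ℝ) 1, weylMajorant M ‖((γ - x : ℝ) : UnitAddCircle)‖ ^ 2
      ≤ 2 / x.den * (2 * 4 * M ^ 2) := by
        gcongr
        exact hle.trans (by gcongr; exact Real.pi_le_four)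
    _ = (4 ^ 2 * M ^ 2) / x.den := by ring

lemma majorArcQ_subset_Ioc (x : ℚ) (N : ℕ) (K : ℝ) : majorArcQ x N K ⊆ Set.Ioc 0 1 :=
  fun _ h => h.1

lemma isBounded_majorArcQ (x : ℚ) (N : ℕ) (K : ℝ) : Bornology.IsBounded (majorArcQ x N K) :=
  (Metric.isBounded_Ioc 0 1).subset (majorArcQ_subset_Ioc x N K)

lemma measurableSet_majorArcQ (x : ℚ) (N : ℕ) (K : ℝ) : MeasurableSet (majorArcQ x N K) := by
  have harc : majorArcQ x N K = Set.Ioc 0 1 ∩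
      {γ : ℝ | ‖((γ - x : ℝ) : UnitAddCircle)‖ ≤ K / (x.den * N)} :=
    Set.ext fun _ => mem_majorArcQ
  rw [harc]
  exact measurableSet_Ioc.inter
    (isClosed_le (continuous_norm_coe_sub x) continuous_const).measurableSet

lemma coe_mem_majorArcQ {x : ℚ} (hx0 : 0 < x) (hx1 : x ≤ 1) (N : ℕ) {K : ℝ} (hK : 0 ≤ K) :
    (x : ℝ) ∈ majorArcQ x N K := by
  refine mem_majorArcQ.2 ⟨⟨by exact_mod_cast hx0, by exact_mod_cast hx1⟩, ?_⟩
  rw [sub_self, AddCircle.coe_zero, norm_zero]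
  positivity

lemma exists_isMaxOn_norm_hatInd_majorArcQ (A : Finset ℕ) {x : ℚ} {N : ℕ} {K : ℝ}
    (hne : (majorArcQ x N K).Nonempty) :
    ∃ γ ∈ majorArcQ x N K, IsMaxOn (fun t => ‖hatInd A t‖) (majorArcQ x N K) γ := by
  set S := Set.Icc (0 : ℝ) 1 ∩ {γ : ℝ | ‖((γ - x : ℝ) : UnitAddCircle)‖ ≤ K / (x.den * N)}
  have hS : IsCompact S :=
    isCompact_Icc.inter_right (isClosed_le (continuous_norm_coe_sub x) continuous_const)
  have hsub : majorArcQ x N K ⊆ S := fun γ hγ =>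
    ⟨Set.Ioc_subset_Icc_self hγ.1, (mem_majorArcQ.1 hγ).2⟩
  obtain ⟨γ, ⟨hγ, hγx⟩, hmax⟩ :=
    hS.exists_isMaxOn (hne.mono hsub) (continuous_hatInd A).norm.continuousOn
  rcases hγ.1.eq_or_lt with rfl | hγ0
  · -- the arc omits the endpoint `0`, which is the same point of the circle as `1`
    refine ⟨1, mem_majorArcQ.2 ⟨⟨one_pos, le_rfl⟩, ?_⟩, fun t ht => ?_⟩
    · rwa [(by ring : (1 : ℝ) - x = 0 - x + 1), norm_coe_add_one]
    · have hperiod : hatInd A 1 = hatInd A 0 :=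
        sum_congr rfl fun a _ => by
          rw [mul_one, mul_zero, eu_zero, ← Int.cast_natCast, eu_intCast]
      simpa only [Set.mem_ofPred_eq, hperiod] using hmax (hsub ht)
  · exact ⟨γ, mem_majorArcQ.2 ⟨⟨hγ0, hγ.2⟩, hγx⟩, hmax.on_subset hsub⟩

/-- The energy `∫_{𝔐(x; N, K)} |ĝ|²` of the balanced function on a major arc. -/
noncomputable def arcEnergy (A : Finset ℕ) (N : ℕ) (α K : ℝ) (x : ℚ) : ℝ :=
  ∫ γ in majorArcQ x N K, ‖hatBal A N α γ‖ ^ 2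

lemma arcEnergy_le_card {A : Finset ℕ} {N : ℕ} (hA : A ⊆ Icc 1 N) {α : ℝ} (hα0 : 0 ≤ α)
    (hα : α * N = #A) (K : ℝ) (x : ℚ) : arcEnergy A N α K x ≤ #A := by
  calc arcEnergy A N α K x ≤ ∫ γ in Set.Ioc (0 : ℝ) 1, ‖hatBal A N α γ‖ ^ 2 :=
        setIntegral_mono_set ((continuous_hatBal A N α).norm.pow 2).integrableOn_Ioc
          (.of_forall fun _ => sq_nonneg _) (majorArcQ_subset_Ioc x N K).eventuallyLE
    _ = #A * (1 - α) := integral_norm_hatBal_sq hA hα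
    _ ≤ #A := mul_le_of_le_one_right (Nat.cast_nonneg _) (by linarith)

lemma setIntegral_majorArcQ_mul_arcMajorant_le {M : ℕ} (hM : 0 < M) {A : Finset ℕ} {x : ℚ}
    {N : ℕ} {K s : ℝ} (hs : ∀ t ∈ majorArcQ x N K, ‖hatInd A t‖ ≤ s) (hs0 : 0 ≤ s) (α : ℝ) :
    ∫ γ in majorArcQ x N K, ‖hatBal A N α γ‖ * ‖hatInd A γ‖ * arcMajorant M x γ ≤
      4 * M * (s / √x.den * √(arcEnergy A N α K x)) := by
  have hbal := (continuous_hatBal A N α).norm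
  have hmaj := continuous_arcMajorant M x
  have hbdd := isBounded_majorArcQ x N K
  have hmaj_arc : √(∫ γ in majorArcQ x N K, arcMajorant M x γ ^ 2) ≤ 4 * M / √x.den :=
    (Real.sqrt_le_sqrt (setIntegral_mono_set (hmaj.pow 2).integrableOn_Ioc
      (.of_forall fun _ => sq_nonneg _) (majorArcQ_subset_Ioc x N K).eventuallyLE)).trans
      (sqrt_integral_arcMajorant_sq_le hM x)
  calc ∫ γ in majorArcQ x N K, ‖hatBal A N α γ‖ * ‖hatInd A γ‖ * arcMajorant M x γ
      ≤ ∫ γ in majorArcQ x N K, s * (‖hatBal A N α γ‖ * arcMajorant M x γ) := by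
        refine setIntegral_mono_on
          (integrableOn_of_continuous_of_isBounded
            ((hbal.mul (continuous_hatInd A).norm).mul hmaj) hbdd)
          (integrableOn_of_continuous_of_isBounded (continuous_const.mul (hbal.mul hmaj)) hbdd)
          (measurableSet_majorArcQ x N K) fun γ hγ => ?_
        rw [mul_right_comm, mul_comm s]
        exact mul_le_mul_of_nonneg_left (hs γ hγ)
          (mul_nonneg (norm_nonneg _) (arcMajorant_nonneg M x γ))
    _ = s * ∫ γ in majorArcQ x N K, ‖hatBal A N α γ‖ * arcMajorant M x γ :=
        integral_const_mul _ _
    _ ≤ s * (√(arcEnergy A N α K x) * (4 * M / √x.den)) := by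
        gcongr
        refine (setIntegral_mul_le_sqrt_mul_sqrt hbal hmaj (fun _ => norm_nonneg _)
          (arcMajorant_nonneg M x) hbdd).trans ?_
        exact mul_le_mul_of_nonneg_left hmaj_arc (Real.sqrt_nonneg _)
    _ = 4 * M * (s / √x.den * √(arcEnergy A N α K x)) := by ring

lemma integral_norm_hatBal_mul_norm_weylSum_le {A : Finset ℕ} {N M L : ℕ} (hA : A ⊆ Icc 1 N)
    {α : ℝ} (hα0 : 0 ≤ α) (hα : α * N = #A) (hL : 204 ≤ L) (hM : 16 * L ^ 8 ≤ M) (hN0 : 0 < N)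
    (hN : N ≤ 9 * M ^ 2) :
    ∫ γ in Set.Ioc (0 : ℝ) 1, ‖hatBal A N α γ‖ * ‖hatInd A γ‖ * ‖weylSum M γ‖ ≤
      8 * (M ^ 2 / √L) * #A + ∑ x ∈ fareyFinset (4 * L), ∫ γ in majorArcQ x N (9 * L),
        ‖hatBal A N α γ‖ * ‖hatInd A γ‖ * arcMajorant M x γ := by
  set F : ℝ → ℝ := fun γ => ‖hatBal A N α γ‖ * ‖hatInd A γ‖
  have hF : Continuous F := (continuous_hatBal A N α).norm.mul (continuous_hatInd A).norm
  have hF0 (γ : ℝ) : 0 ≤ F γ := mul_nonneg (norm_nonneg _) (norm_nonneg _)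
  set H : ℚ → ℝ → ℝ := fun x =>
    (majorArcQ x N (9 * L)).indicator fun γ => F γ * arcMajorant M x γ
  have hH : ∀ x ∈ fareyFinset (4 * L), IntegrableOn (H x) (Set.Ioc 0 1) := fun x _ =>
    (hF.mul (continuous_arcMajorant M x)).integrableOn_Ioc.indicator
      (measurableSet_majorArcQ x N (9 * L))
  have hHint (x : ℚ) : ∫ γ in Set.Ioc (0 : ℝ) 1, H x γ =
      ∫ γ in majorArcQ x N (9 * L), F γ * arcMajorant M x γ := by
    rw [setIntegral_indicator (measurableSet_majorArcQ x N (9 * L)),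
      Set.inter_eq_right.2 (majorArcQ_subset_Ioc x N (9 * L))]
  have hconst : IntegrableOn (fun γ => 8 * (M ^ 2 / √L) * F γ) (Set.Ioc 0 1) :=
    (continuous_const.mul hF).integrableOn_Ioc
  calc ∫ γ in Set.Ioc (0 : ℝ) 1, F γ * ‖weylSum M γ‖
      ≤ ∫ γ in Set.Ioc (0 : ℝ) 1,
          (8 * (M ^ 2 / √L) * F γ + ∑ x ∈ fareyFinset (4 * L), H x γ) := by
        refine setIntegral_mono_on (hF.mul (continuous_weylSum M).norm).integrableOn_Ioc
          (hconst.add (integrable_finsetSum _ hH)) measurableSet_Ioc fun γ hγ => ?_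
        refine (mul_le_mul_of_nonneg_left (norm_weylSum_le_add_sum_indicator hL hM hN0 hN hγ)
          (hF0 γ)).trans_eq ?_
        rw [mul_add, mul_comm, mul_sum]
        simp only [H, Set.indicator_mul_right]
    _ = 8 * (M ^ 2 / √L) * (∫ γ in Set.Ioc (0 : ℝ) 1, F γ) + ∑ x ∈ fareyFinset (4 * L),
          ∫ γ in majorArcQ x N (9 * L), F γ * arcMajorant M x γ := by
        rw [integral_add hconst (integrable_finsetSum _ hH), integral_const_mul,
          integral_finsetSum _ hH]
        simp only [hHint]
    _ ≤ 8 * (M ^ 2 / √L) * #A + ∑ x ∈ fareyFinset (4 * L),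
          ∫ γ in majorArcQ x N (9 * L), F γ * arcMajorant M x γ := by
        gcongr
        exact integral_norm_hatBal_mul_norm_hatInd_le hA hα0 hα

lemma exists_le_sum_norm_hatInd_mul_sqrt_arcEnergy {A : Finset ℕ} {N M L : ℕ}
    (hA : A ⊆ Icc 1 N) (hS : NoSquareDiff A) {α : ℝ} (hα0 : 0 ≤ α) (hα : α * N = #A)
    (hL : 204 ≤ L) (hLα : 32 ≤ α * √L) (hM : 16 * L ^ 8 ≤ M) (hN0 : 0 < N)
    (hMN : 2 * M ^ 2 ≤ N) (hNM : N ≤ 9 * M ^ 2) :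
    ∃ γ : ℚ → ℝ, (∀ x ∈ fareyFinset (4 * L), γ x ∈ majorArcQ x N (9 * L)) ∧
      α * #A * M / 16 ≤ ∑ x ∈ fareyFinset (4 * L),
        ‖hatInd A (γ x)‖ / √x.den * √(arcEnergy A N α (9 * L) x) := by
  have hM0 : 0 < M := (by positivity : 0 < 16 * L ^ 8).trans_le hM
  have hne : ∀ x ∈ fareyFinset (4 * L), (majorArcQ x N (9 * L)).Nonempty := fun x hx =>
    have hx' := (mem_fareyFinset.1 hx).2
    ⟨x, coe_mem_majorArcQ hx'.1 hx'.2 N (by positivity)⟩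
  choose! γ hγ hmax using fun x hx => exists_isMaxOn_norm_hatInd_majorArcQ A (hne x hx)
  refine ⟨γ, hγ, ?_⟩
  set T := ∑ x ∈ fareyFinset (4 * L), ‖hatInd A (γ x)‖ / √x.den * √(arcEnergy A N α (9 * L) x)
  have harcs : ∑ x ∈ fareyFinset (4 * L), ∫ t in majorArcQ x N (9 * L),
      ‖hatBal A N α t‖ * ‖hatInd A t‖ * arcMajorant M x t ≤ 4 * M * T := by
    rw [mul_sum]
    exact sum_le_sum fun x hx =>
      setIntegral_majorArcQ_mul_arcMajorant_le hM0 (hmax x hx) (norm_nonneg _) α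
  have hminor : 8 * (M ^ 2 / √L) * #A ≤ α * #A * M ^ 2 / 4 := by
    have hL0 : 0 < √(L : ℝ) := Real.sqrt_pos.2 (by positivity)
    calc 8 * (M ^ 2 / √L) * #A = 32 * (M ^ 2 * #A) / (4 * √L) := by
          field_simp
          ring
      _ ≤ α * √L * (M ^ 2 * #A) / (4 * √L) := by gcongr
      _ = α * #A * M ^ 2 / 4 := by field_simp
  have hlower := le_integral_norm_hatBal_mul_norm_weylSum hA hS hα0 hMN
  have hupper := integral_norm_hatBal_mul_norm_weylSum_le hA hα0 hα hL hM hN0 hNM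
  refine le_of_mul_le_mul_right ?_ (by exact_mod_cast hM0 : (0 : ℝ) < M)
  linarith

/-! ### Dyadic pigeonholing -/

section Dyadic

variable {ι : Type*} {s : Finset ι}

lemma two_pow_le_iff_le_floor_logb {y : ℝ} (hy : 1 ≤ y) (i : ℕ) :
    2 ^ i ≤ y ↔ i ≤ ⌊Real.logb 2 y⌋₊ := by
  rw [Nat.le_floor_iff (Real.logb_nonneg one_lt_two hy),
    Real.le_logb_iff_rpow_le one_lt_two (by linarith), Real.rpow_natCast]

lemma exists_dyadic_subset {v w : ι → ℝ} {ε R : ℝ} (hε : 0 < ε) (hR : ε ≤ R)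
    (hv : ∀ x ∈ s, v x ∈ Set.Icc ε R) (hw : ∀ x ∈ s, 0 ≤ w x) :
    ∃ V ∈ Set.Icc ε R, ∃ t ⊆ s, (∀ x ∈ t, V ≤ v x ∧ v x ≤ 2 * V) ∧
      ∑ x ∈ s, w x ≤ (Real.logb 2 (R / ε) + 1) * ∑ x ∈ t, w x := by
  classical
  have hRε : 1 ≤ R / ε := (one_le_div hε).2 hR
  choose! i hi_le hi_lt using fun x hx =>
    exists_nat_pow_near ((one_le_div hε).2 (hv x hx).1) one_lt_two
  set n := ⌊Real.logb 2 (R / ε)⌋₊ with hn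
  have hmaps : ∀ x ∈ s, i x ∈ range (n + 1) := fun x hx => by
    rw [mem_range_succ_iff, hn, ← two_pow_le_iff_le_floor_logb hRε]
    exact (hi_le x hx).trans (div_le_div_of_nonneg_right (hv x hx).2 hε.le)
  obtain ⟨j, hj, hfiber⟩ := exists_le_sum_fiber_of_maps_to_of_nsmul_le_sum
    (b := (∑ x ∈ s, w x) / (n + 1 : ℕ)) hmaps nonempty_range_add_one (by
      rw [card_range, nsmul_eq_mul, mul_div_cancel₀ _ (by positivity)])
  rw [mem_range_succ_iff, hn, ← two_pow_le_iff_le_floor_logb hRε, le_div_iff₀ hε] at hj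
  refine ⟨2 ^ j * ε, ⟨le_mul_of_one_le_left hε.le (one_le_pow₀ one_le_two), hj⟩,
    {x ∈ s | i x = j}, filter_subset _ _, fun x hx => ?_, ?_⟩
  · obtain ⟨hxs, rfl⟩ := mem_filter.1 hx
    have hlt := hi_lt x hxs
    rw [div_lt_iff₀ hε, pow_succ] at hlt
    exact ⟨(le_div_iff₀ hε).1 (hi_le x hxs), by linarith⟩
  · have hnonneg : 0 ≤ ∑ x ∈ s with i x = j, w x :=
      sum_nonneg fun x hx => hw x (mem_filter.1 hx).1
    rw [div_le_iff₀' (by positivity)] at hfiber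
    refine hfiber.trans (mul_le_mul_of_nonneg_right ?_ hnonneg)
    push_cast
    linarith [Nat.floor_le (Real.logb_nonneg one_lt_two hRε)]

lemma exists_dyadic_subset_div_sqrt_mul {q e a : ι → ℝ} {P ε R : ℝ} (hP : 1 ≤ P) (hε : 0 < ε)
    (hR : ε ≤ R) (hq : ∀ x ∈ s, q x ∈ Set.Icc 1 P) (he : ∀ x ∈ s, e x ∈ Set.Icc ε R)
    (ha : ∀ x ∈ s, 0 ≤ a x) :
    ∃ Q ∈ Set.Icc 1 (2 * P), ∃ V ∈ Set.Icc ε R, ∃ t ⊆ s, (∀ x ∈ t, q x ≤ Q ∧ V ≤ e x) ∧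
      √Q * ∑ x ∈ s, a x / √(q x) * e x ≤
        3 * V * ((Real.logb 2 P + 1) * (Real.logb 2 (R / ε) + 1) * ∑ x ∈ t, a x) := by
  have hw : ∀ x ∈ s, 0 ≤ a x / √(q x) * e x := fun x hx =>
    mul_nonneg (div_nonneg (ha x hx) (Real.sqrt_nonneg _)) (hε.le.trans (he x hx).1)
  obtain ⟨U, hU, s', hs', hqU, hsum⟩ := exists_dyadic_subset one_pos hP hq hw
  obtain ⟨V, hV, t, ht, heV, hsum'⟩ := exists_dyadic_subset hε hR (fun x hx => he x (hs' hx))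
    fun x hx => hw x (hs' hx)
  rw [div_one] at hsum
  refine ⟨2 * U, ⟨by linarith [hU.1], by linarith [hU.2]⟩, V, hV, t, ht.trans hs',
    fun x hx => ⟨(hqU x (ht hx)).2, (heV x hx).1⟩, ?_⟩
  have hterm : ∀ x ∈ t, √(2 * U) * (a x / √(q x) * e x) ≤ 3 * V * a x := fun x hx => by
    have hU0 : 0 < U := one_pos.trans_le hU.1
    have hUq : U ≤ q x := (hqU x (ht hx)).1
    have hax := ha x (hs' (ht hx))
    have : 0 ≤ e x := hε.le.trans (he x (hs' (ht hx))).1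
    have : 0 < √U := Real.sqrt_pos.2 hU0
    have hsqrt_two : √2 ≤ 3 / 2 := (Real.sqrt_le_left (by norm_num)).2 (by norm_num)
    calc √(2 * U) * (a x / √(q x) * e x) ≤ 3 / 2 * √U * (a x / √U * (2 * V)) := by
          rw [Real.sqrt_mul zero_le_two]
          gcongr
          exact (heV x hx).2
      _ = 3 * V * a x := by field_simp
  calc √(2 * U) * ∑ x ∈ s, a x / √(q x) * e x
      ≤ √(2 * U) * ((Real.logb 2 P + 1) * ((Real.logb 2 (R / ε) + 1) *
          ∑ x ∈ t, a x / √(q x) * e x)) := by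
        have := Real.logb_nonneg one_lt_two hP
        gcongr
        exact hsum.trans (by gcongr)
    _ = (Real.logb 2 P + 1) * (Real.logb 2 (R / ε) + 1) *
          ∑ x ∈ t, √(2 * U) * (a x / √(q x) * e x) := by
        rw [← mul_sum]
        ring
    _ ≤ (Real.logb 2 P + 1) * (Real.logb 2 (R / ε) + 1) * ∑ x ∈ t, 3 * V * a x := by
        have := Real.logb_nonneg one_lt_two hP
        have := Real.logb_nonneg one_lt_two ((one_le_div hε).2 hR)
        exact mul_le_mul_of_nonneg_left (sum_le_sum hterm) (by positivity)
    _ = 3 * V * ((Real.logb 2 P + 1) * (Real.logb 2 (R / ε) + 1) * ∑ x ∈ t, a x) := by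
        rw [← mul_sum]
        ring

lemma sub_card_mul_le_sum_filter {e w : ι → ℝ} {a ε : ℝ} (ha : 0 ≤ a) (hε : 0 ≤ ε)
    (hw : ∀ x ∈ s, w x ≤ a * e x) :
    ∑ x ∈ s, w x - #s * (a * ε) ≤ ∑ x ∈ s with ε ≤ e x, w x := by
  have hsmall : ∑ x ∈ s with ¬ε ≤ e x, w x ≤ #s * (a * ε) := by
    calc ∑ x ∈ s with ¬ε ≤ e x, w x ≤ #{x ∈ s | ¬ε ≤ e x} • (a * ε) :=
          sum_le_card_nsmul _ _ _ fun x hx => by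
            obtain ⟨hxs, hxε⟩ := mem_filter.1 hx
            exact (hw x hxs).trans (mul_le_mul_of_nonneg_left (not_le.1 hxε).le ha)
      _ ≤ #s * (a * ε) := by
          rw [nsmul_eq_mul]
          gcongr
          exact filter_subset _ _
  linarith [sum_filter_add_sum_filter_not s (fun x => ε ≤ e x) w]

end Dyadic

lemma one_third_le_log {t : ℝ} (ht : 3 / 2 ≤ t) : 1 / 3 ≤ Real.log t := by
  have hinv : t⁻¹ ≤ 2 / 3 := (inv_le_of_inv_le₀ (by norm_num) (by norm_num; linarith))
  linarith [Real.one_sub_inv_le_log_of_pos (by linarith : 0 < t)]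

lemma logb_two_add_one_le {y t : ℝ} {k : ℕ} (hy : 0 < y) (ht : 3 / 2 ≤ t) (hyt : y ≤ t ^ k) :
    Real.logb 2 y + 1 ≤ (3 / 2 * k + 3) * Real.log t := by
  have hlog := one_third_le_log ht
  have hlogy : Real.log y ≤ k * Real.log t := by
    rw [← Real.log_pow]
    exact Real.log_le_log hy hyt
  have hlogb : Real.logb 2 y ≤ 3 / 2 * (k * Real.log t) := by
    rw [Real.logb, div_le_iff₀ (Real.log_pos one_lt_two)]
    nlinarith [Real.log_two_gt_d9, mul_nonneg k.cast_nonneg (by linarith : 0 ≤ Real.log t)]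
  linarith

/-! ### Large Fourier coefficients on major arcs -/

/-- The conclusion of the theorem for a single set `A`, with its constants left as parameters: `c`
is the constant of the two lower bounds, `lo` and `hi` are the bounds for `B`, `Q`, `K`, and the
frequencies `γ x` lie within `hi / N` of `x`. -/
def HasLargeMajorArcs (A : Finset ℕ) (N : ℕ) (α c lo hi : ℝ) : Prop :=
  ∃ B Q K : ℝ, (lo ≤ B ∧ B ≤ hi) ∧ (lo ≤ Q ∧ Q ≤ hi) ∧ (lo ≤ K ∧ K ≤ hi) ∧
    ∃ 𝓑 : Finset ℚ, (∀ x ∈ 𝓑, (x.den : ℝ) ≤ Q ∧ 0 < x ∧ x ≤ 1) ∧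
      (∃ γ : ℚ → ℝ,
        (∀ x ∈ 𝓑, γ x ∈ Set.Ioc (0 : ℝ) 1 ∧
          |γ x - (x : ℝ) - round (γ x - (x : ℝ))| ≤ hi / N) ∧
        c * B * #A * √Q / Real.log (1 / α) ^ 2 ≤ ∑ x ∈ 𝓑, ‖hatInd A (γ x)‖) ∧
      ∀ x ∈ 𝓑, c * α * #A / B ^ 2 ≤ arcEnergy A N α K x

lemma HasLargeMajorArcs.mono {A : Finset ℕ} {N : ℕ} {α c lo hi lo' hi' : ℝ}
    (h : HasLargeMajorArcs A N α c lo hi) (hlo : lo' ≤ lo) (hhi : hi ≤ hi') :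
    HasLargeMajorArcs A N α c lo' hi' := by
  obtain ⟨B, Q, K, hB, hQ, hK, 𝓑, h𝓑, ⟨γ, hγ, hsum⟩, henergy⟩ := h
  refine ⟨B, Q, K, ⟨hlo.trans hB.1, hB.2.trans hhi⟩, ⟨hlo.trans hQ.1, hQ.2.trans hhi⟩,
    ⟨hlo.trans hK.1, hK.2.trans hhi⟩, 𝓑, h𝓑, ⟨γ, fun x hx => ⟨(hγ x hx).1, ?_⟩, hsum⟩, henergy⟩
  exact (hγ x hx).2.trans (div_le_div_of_nonneg_right hhi N.cast_nonneg)

lemma NoSquareDiff.two_mul_card_le {A : Finset ℕ} {N : ℕ} (hS : NoSquareDiff A)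
    (hA : A ⊆ Icc 1 N) : 2 * #A ≤ N + 1 := by
  have hdisj : Disjoint A (A.image (· + 1)) := by
    rw [disjoint_right]
    rintro _ himage ha
    obtain ⟨b, hb, rfl⟩ := mem_image.1 himage
    exact hS (b + 1) ha b hb 1 one_pos rfl
  have hsub : A ∪ A.image (· + 1) ⊆ Icc 1 (N + 1) := by
    refine union_subset (hA.trans (Icc_subset_Icc_right N.le_succ)) (image_subset_iff.2 ?_)
    intro b hb
    have := mem_Icc.1 (hA hb)
    exact mem_Icc.2 (by omega)
  have hcard := card_le_card hsub
  rw [card_union_of_disjoint hdisj, card_image_of_injective _ (add_left_injective 1),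
    Nat.card_Icc] at hcard
  omega

lemma majorArcQ_one_eq_Ioc {N : ℕ} {K : ℝ} (hN : 0 < N) (hK : N ≤ K) :
    majorArcQ 1 N K = Set.Ioc 0 1 := by
  refine (majorArcQ_subset_Ioc 1 N K).antisymm fun γ hγ => ⟨hγ, (abs_sub_round _).trans ?_⟩
  rw [Rat.den_one, Nat.cast_one, one_mul, le_div_iff₀ (by exact_mod_cast hN)]
  linarith [N.cast_nonneg (α := ℝ)]

-- When `hi ≥ N` a single arc is the whole circle, and Parseval supplies its energy.
lemma hasLargeMajorArcs_of_le {A : Finset ℕ} {N : ℕ} (hA : A ⊆ Icc 1 N) (hN0 : 0 < N) {α hi : ℝ}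
    (hα0 : 0 < α) (hα1 : α ≤ 2 / 3) (hα : α * N = #A) (hhi : 2 ≤ hi) (hN : N ≤ hi) :
    HasLargeMajorArcs A N α (1 / 10 ^ 6) α hi := by
  have : 0 ≤ hi / N := by positivity
  refine ⟨2, 1, hi, ⟨by linarith, hhi⟩, ⟨by linarith, by linarith⟩, ⟨by linarith, le_rfl⟩, {1},
    by simp, ⟨fun _ => 1, by simpa, ?_⟩, ?_⟩
  · have hone : hatInd A 1 = #A := by
      simp_rw [hatInd, mul_one, ← Int.cast_natCast (R := ℝ), eu_intCast, sum_const, nsmul_one]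
    have hlog : 1 / 3 ≤ Real.log (1 / α) :=
      one_third_le_log ((le_div_iff₀ hα0).2 (by linarith))
    rw [sum_singleton, hone, Complex.norm_natCast, Real.sqrt_one, mul_one,
      div_le_iff₀ (by positivity), mul_comm]
    gcongr
    nlinarith
  · simp only [mem_singleton, forall_eq]
    rw [arcEnergy, majorArcQ_one_eq_Ioc hN0 hN, integral_norm_hatBal_sq hA hα]
    have := mul_nonneg (Nat.cast_nonneg (α := ℝ) #A) (by linarith : 0 ≤ 2 / 3 - α)
    linarith [(Nat.cast_nonneg #A : (0 : ℝ) ≤ #A)]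

lemma exists_major_arc_scale {t : ℝ} (ht : 3 / 2 ≤ t) :
    ∃ L : ℕ, 204 ≤ L ∧ 32 * t ≤ √L ∧ 4 * L ≤ t ^ 23 := by
  have hceil : (⌈1024 * t ^ 2⌉₊ : ℝ) < 1024 * t ^ 2 + 1 := Nat.ceil_lt_add_one (by positivity)
  have hle : 1024 * t ^ 2 ≤ ⌈1024 * t ^ 2⌉₊ := Nat.le_ceil _
  have ht2 : (3 / 2) ^ 2 ≤ t ^ 2 := by gcongr
  refine ⟨⌈1024 * t ^ 2⌉₊, ?_, ?_, ?_⟩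
  · have : (204 : ℝ) ≤ ⌈1024 * t ^ 2⌉₊ := by linarith
    exact_mod_cast this
  · exact Real.le_sqrt_of_sq_le (by linarith)
  · have ht21 : 4100 ≤ t ^ 21 := by
      calc (4100 : ℝ) ≤ (3 / 2) ^ 21 := by norm_num
        _ ≤ t ^ 21 := by gcongr
    calc 4 * (⌈1024 * t ^ 2⌉₊ : ℝ) ≤ 4100 * t ^ 2 := by linarith
      _ ≤ t ^ 21 * t ^ 2 := by gcongr
      _ = t ^ 23 := by ring

lemma exists_two_mul_sq_le_le_nine_mul_sq {N : ℕ} (hN : 2 ≤ N) :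
    ∃ M : ℕ, 2 * M ^ 2 ≤ N ∧ N ≤ 9 * M ^ 2 := by
  have hle := Nat.sqrt_le' (N / 2)
  have hlt := Nat.lt_succ_sqrt' (N / 2)
  have hpos : 0 < (N / 2).sqrt := Nat.sqrt_pos.2 (by omega)
  refine ⟨(N / 2).sqrt, by omega, ?_⟩
  have : N ≤ 2 * ((N / 2).sqrt + 1) ^ 2 := by
    rw [Nat.succ_eq_add_one] at hlt
    omega
  nlinarith

lemma mul_sq_le_pow {P t : ℝ} (hP : 0 ≤ P) (ht : 3 / 2 ≤ t) (hPt : P ≤ t ^ 23) :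
    96 * P ^ 2 ≤ t ^ 58 := by
  calc 96 * P ^ 2 ≤ (3 / 2) ^ 12 * (t ^ 23) ^ 2 := by gcongr; norm_num
    _ ≤ t ^ 12 * (t ^ 23) ^ 2 := by gcongr
    _ = t ^ 58 := by ring

lemma logb_mul_logb_le_log_sq {P t : ℝ} (hP : 1 ≤ P) (ht : 3 / 2 ≤ t) (hPt : P ≤ t ^ 23) :
    (Real.logb 2 P + 1) * (Real.logb 2 (96 * P ^ 2 * t) + 1) ≤ 3432 * Real.log t ^ 2 := by
  have hbound : 96 * P ^ 2 * t ≤ t ^ 59 := by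
    rw [pow_succ]
    exact mul_le_mul_of_nonneg_right (mul_sq_le_pow (by linarith) ht hPt) (by linarith)
  have hone : 1 ≤ 96 * P ^ 2 * t :=
    one_le_mul_of_one_le_of_one_le (by linarith [one_le_pow₀ hP (n := 2)]) (by linarith)
  have hlogP := logb_two_add_one_le (by linarith) ht hPt
  have hlog := logb_two_add_one_le (by linarith) ht hbound
  have := Real.logb_nonneg one_lt_two hone
  have := one_third_le_log ht
  calc (Real.logb 2 P + 1) * (Real.logb 2 (96 * P ^ 2 * t) + 1)
      ≤ (3 / 2 * (23 : ℕ) + 3) * Real.log t * ((3 / 2 * (59 : ℕ) + 3) * Real.log t) := by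
        gcongr
    _ ≤ 3432 * Real.log t ^ 2 := by
        push_cast
        nlinarith

lemma le_sum_filter_fareyFinset {A : Finset ℕ} {P : ℕ} {γ : ℚ → ℝ} {e : ℚ → ℝ} {σ : ℝ}
    (hσ : 0 ≤ σ) (hP : 0 < P) (he : ∀ x, 0 ≤ e x)
    (hsum : σ * #A / 48 ≤ ∑ x ∈ fareyFinset P, ‖hatInd A (γ x)‖ / √x.den * e x) :
    σ * #A / 96 ≤ ∑ x ∈ fareyFinset P with σ / (96 * P ^ 2) ≤ e x,
      ‖hatInd A (γ x)‖ / √x.den * e x := by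
  have hterm : ∀ x ∈ fareyFinset P, ‖hatInd A (γ x)‖ / √x.den * e x ≤ #A * e x := fun x _ => by
    have hden : 1 ≤ √(x.den : ℝ) := Real.one_le_sqrt.2 (by exact_mod_cast x.den_pos)
    exact mul_le_mul_of_nonneg_right
      ((div_le_self (norm_nonneg _) hden).trans (norm_hatInd_le A _)) (he x)
  have hsmall : #(fareyFinset P) * (#A * (σ / (96 * P ^ 2))) ≤ σ * #A / 96 := by
    have hcard : (#(fareyFinset P) : ℝ) ≤ P ^ 2 := by exact_mod_cast card_fareyFinset_le P
    calc #(fareyFinset P) * (#A * (σ / (96 * P ^ 2))) ≤ P ^ 2 * (#A * (σ / (96 * P ^ 2))) := by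
          gcongr
      _ = σ * #A / 96 := by field_simp
  linarith [sub_card_mul_le_sum_filter (Nat.cast_nonneg #A)
    (by positivity : 0 ≤ σ / (96 * P ^ 2)) hterm]

lemma exists_dyadic_level_arcs {A : Finset ℕ} {N P : ℕ} {α K : ℝ} {γ : ℚ → ℝ}
    (hA : A ⊆ Icc 1 N) (hN0 : 0 < N) (hα0 : 0 < α) (hα1 : α ≤ 2 / 3) (hα : α * N = #A)
    (hP : 0 < P) (hPα : P ≤ α⁻¹ ^ 23)
    (hsum : α * √N * #A / 48 ≤
      ∑ x ∈ fareyFinset P, ‖hatInd A (γ x)‖ / √x.den * √(arcEnergy A N α K x)) :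
    ∃ Q ∈ Set.Icc (1 : ℝ) (2 * P), ∃ V ∈ Set.Icc (α * √N / (96 * P ^ 2)) √N,
      ∃ t ⊆ fareyFinset P, (∀ x ∈ t, x.den ≤ Q ∧ V ^ 2 ≤ arcEnergy A N α K x) ∧
        α * √N / V * #A * √Q ≤ 10 ^ 6 * (Real.log α⁻¹ ^ 2 * ∑ x ∈ t, ‖hatInd A (γ x)‖) := by
  have hP1 : (1 : ℝ) ≤ P := by exact_mod_cast hP
  have : 0 < √(N : ℝ) := Real.sqrt_pos.2 (by exact_mod_cast hN0)
  set ε := α * √N / (96 * P ^ 2) with hε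
  have hε0 : 0 < ε := by positivity
  have hratio : √N / ε = 96 * P ^ 2 * α⁻¹ := by rw [hε]; field_simp
  have hεN : ε ≤ √N := by
    rw [← one_le_div hε0, hratio, ← div_eq_mul_inv, one_le_div hα0]
    linarith [one_le_pow₀ hP1 (n := 2)]
  have hupper : ∀ x, √(arcEnergy A N α K x) ≤ √N := fun x =>
    Real.sqrt_le_sqrt ((arcEnergy_le_card hA hα0.le hα K x).trans
      (hα ▸ mul_le_of_le_one_left N.cast_nonneg (by linarith)))
  have hlarge := le_sum_filter_fareyFinset (by positivity) hP (fun x => Real.sqrt_nonneg _) hsum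
  obtain ⟨Q, hQ, V, hV, t, hts, hlevel, hQV⟩ := exists_dyadic_subset_div_sqrt_mul hP1 hε0 hεN
    (q := fun x : ℚ => x.den) (a := fun x => ‖hatInd A (γ x)‖)
    (fun x hx => ⟨by exact_mod_cast x.den_pos,
      by exact_mod_cast (mem_fareyFinset.1 (mem_filter.1 hx).1).1⟩)
    (fun x hx => ⟨(mem_filter.1 hx).2, hupper x⟩) fun x _ => norm_nonneg _
  have hV0 : 0 < V := hε0.trans_le hV.1
  refine ⟨Q, hQ, V, hV, t, hts.trans (filter_subset _ _),
    fun x hx => ⟨(hlevel x hx).1, (Real.le_sqrt' hV0).1 (hlevel x hx).2⟩, ?_⟩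
  have hlogs := logb_mul_logb_le_log_sq hP1 (by rw [le_inv_comm₀] <;> linarith) hPα
  set S := ∑ x ∈ t, ‖hatInd A (γ x)‖
  have hS : 0 ≤ S := sum_nonneg fun _ _ => norm_nonneg _
  have hkey : √Q * (α * √N * #A / 96) ≤ 3 * V * (3432 * Real.log α⁻¹ ^ 2 * S) := by
    rw [hratio] at hQV
    calc _ ≤ _ := mul_le_mul_of_nonneg_left hlarge (Real.sqrt_nonneg _)
      _ ≤ _ := hQV
      _ ≤ _ := by gcongr
  rw [div_mul_eq_mul_div, div_mul_eq_mul_div, div_le_iff₀ hV0]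
  nlinarith [mul_nonneg hV0.le (mul_nonneg (sq_nonneg (Real.log α⁻¹)) hS)]

lemma hasLargeMajorArcs_of_le_sum {A : Finset ℕ} {N P : ℕ} {α K : ℝ} {γ : ℚ → ℝ}
    (hA : A ⊆ Icc 1 N) (hN0 : 0 < N) (hα0 : 0 < α) (hα1 : α ≤ 2 / 3) (hα : α * N = #A)
    (hP : 0 < P) (hPα : P ≤ α⁻¹ ^ 23) (hK1 : 1 ≤ K) (hKα : K ≤ α⁻¹ ^ 26)
    (hγ : ∀ x ∈ fareyFinset P, γ x ∈ majorArcQ x N K)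
    (hsum : α * √N * #A / 48 ≤
      ∑ x ∈ fareyFinset P, ‖hatInd A (γ x)‖ / √x.den * √(arcEnergy A N α K x)) :
    HasLargeMajorArcs A N α (1 / 10 ^ 6) α (α⁻¹ ^ 58) := by
  have ht : 3 / 2 ≤ α⁻¹ := by rw [le_inv_comm₀] <;> linarith
  have hN0' : (0 : ℝ) < N := by exact_mod_cast hN0
  have hP1 : (1 : ℝ) ≤ P := by exact_mod_cast hP
  have hPα' : 96 * (P : ℝ) ^ 2 ≤ α⁻¹ ^ 58 := mul_sq_le_pow (by linarith) ht hPα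
  have hKα' : K ≤ α⁻¹ ^ 58 := hKα.trans (pow_le_pow_right₀ (by linarith) (by norm_num))
  obtain ⟨Q, hQ, V, hV, t, hts, hlevel, hQV⟩ :=
    exists_dyadic_level_arcs hA hN0 hα0 hα1 hα hP hPα hsum
  have : 0 < √(N : ℝ) := Real.sqrt_pos.2 hN0'
  have hV0 : 0 < V := (by positivity : 0 < α * √N / (96 * P ^ 2)).trans_le hV.1
  have hB : α * √N / V ≤ 96 * P ^ 2 := (div_le_comm₀ (by positivity) hV0).1 hV.1
  refine ⟨α * √N / V, Q, K, ⟨?_, hB.trans hPα'⟩, ⟨by linarith [hQ.1], by nlinarith [hQ.2]⟩,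
    ⟨by linarith, hKα'⟩, t, fun x hx => ⟨(hlevel x hx).1, (mem_fareyFinset.1 (hts hx)).2⟩,
    ⟨γ, fun x hx => ⟨(hγ x (hts hx)).1, (hγ x (hts hx)).2.trans ?_⟩, ?_⟩, fun x hx => ?_⟩
  · exact (le_div_iff₀ hV0).2 (mul_le_mul_of_nonneg_left hV.2 hα0.le)
  · have : (N : ℝ) ≤ x.den * N := le_mul_of_one_le_left hN0'.le (by exact_mod_cast x.den_pos)
    gcongr
  · have : 1 / 3 ≤ Real.log α⁻¹ := one_third_le_log ht
    rw [one_div α, div_le_iff₀ (by positivity)]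
    linarith
  · calc 1 / 10 ^ 6 * α * #A / (α * √N / V) ^ 2 = 1 / 10 ^ 6 * V ^ 2 := by
          rw [div_pow, mul_pow, Real.sq_sqrt hN0'.le, ← hα]
          field_simp
      _ ≤ arcEnergy A N α K x := by linarith [sq_nonneg V, (hlevel x hx).2]

lemma hasLargeMajorArcs_of_pow_le {A : Finset ℕ} {N : ℕ} {α : ℝ} (hA : A ⊆ Icc 1 N)
    (hS : NoSquareDiff A) (hN : 2 ≤ N) (hα0 : 0 < α) (hα1 : α ≤ 2 / 3) (hα : α * N = #A)
    (hNα : α⁻¹ ^ 368 ≤ N) : HasLargeMajorArcs A N α (1 / 10 ^ 6) α (α⁻¹ ^ 58) := by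
  have ht : 3 / 2 ≤ α⁻¹ := by rw [le_inv_comm₀] <;> linarith
  obtain ⟨L, hL, hLα, hLt⟩ := exists_major_arc_scale ht
  obtain ⟨M, hMN, hNM⟩ := exists_two_mul_sq_le_le_nine_mul_sq hN
  have hsqrtN : √(N : ℝ) ≤ 3 * M := by
    rw [Real.sqrt_le_left (by positivity), mul_pow]
    exact_mod_cast hNM
  have hLM : (16 * L ^ 8 : ℝ) ≤ M := by
    have h : (4 * L : ℝ) ^ 8 ≤ 3 * M := by
      calc (4 * L : ℝ) ^ 8 ≤ (α⁻¹ ^ 23) ^ 8 := by gcongr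
        _ ≤ √N := Real.le_sqrt_of_sq_le (by rwa [← pow_mul, ← pow_mul])
        _ ≤ 3 * M := hsqrtN
    rw [mul_pow] at h
    linarith [pow_nonneg (Nat.cast_nonneg (α := ℝ) L) 8]
  obtain ⟨γ, hγ, hsum⟩ := exists_le_sum_norm_hatInd_mul_sqrt_arcEnergy hA hS hα0.le hα hL
    (by rwa [← div_eq_mul_inv, div_le_iff₀' hα0] at hLα) (by exact_mod_cast hLM) (by omega) hMN hNM
  have hL' : (204 : ℝ) ≤ L := by exact_mod_cast hL
  refine hasLargeMajorArcs_of_le_sum hA (by omega) hα0 hα1 hα (by omega)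
    (by exact_mod_cast hLt) (by linarith) ?_ hγ (le_trans ?_ hsum)
  · calc (9 * L : ℝ) ≤ (3 / 2) ^ 3 * (4 * L) := by linarith
      _ ≤ α⁻¹ ^ 3 * α⁻¹ ^ 23 := by gcongr
      _ = α⁻¹ ^ 26 := by ring
  · calc α * √N * #A / 48 ≤ α * (3 * M) * #A / 48 := by gcongr
      _ = α * #A * M / 16 := by ring

lemma NoSquareDiff.hasLargeMajorArcs {A : Finset ℕ} {N : ℕ} {α : ℝ} (hS : NoSquareDiff A)
    (hA : A ⊆ Icc 1 N) (hN : 2 ≤ N) (hα0 : 0 < α) (hα : α * N = #A) :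
    HasLargeMajorArcs A N α (1 / 10 ^ 6) α (α⁻¹ ^ 368) := by
  have hN0 : (0 : ℝ) < N := by positivity
  have hα1 : α ≤ 2 / 3 := by
    have hcard := hS.two_mul_card_le hA
    have : (3 * #A : ℝ) ≤ 2 * N := by exact_mod_cast (by omega : 3 * #A ≤ 2 * N)
    rw [← mul_le_mul_iff_of_pos_right hN0]
    linarith
  have ht : 3 / 2 ≤ α⁻¹ := by rw [le_inv_comm₀] <;> linarith
  rcases le_total (N : ℝ) (α⁻¹ ^ 368) with hsparse | hdense
  · have htwo : 2 ≤ α⁻¹ ^ 368 := by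
      calc (2 : ℝ) ≤ (3 / 2) ^ 2 := by norm_num
        _ ≤ α⁻¹ ^ 2 := by gcongr
        _ ≤ α⁻¹ ^ 368 := pow_le_pow_right₀ (by linarith) (by norm_num)
    exact hasLargeMajorArcs_of_le hA (by omega) hα0 hα1 hα htwo hsparse
  · exact (hasLargeMajorArcs_of_pow_le hA hS hN hα0 hα1 hα hdense).mono le_rfl
      (pow_le_pow_right₀ (by linarith) (by norm_num))

end

theorem statement_9_general :
    ∃ c > (0 : ℝ), ∃ C > (0 : ℝ), ∀ N : ℕ, 2 ≤ N →
      ∀ A : Finset ℕ, A ⊆ Finset.Icc 1 N → NoSquareDiff A →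
      ∀ α : ℝ, α = (A.card : ℝ) / N → 0 < α →
      ∃ B Q K : ℝ,
        (c * α ^ C ≤ B ∧ B ≤ C * α ^ (-C)) ∧
        (c * α ^ C ≤ Q ∧ Q ≤ C * α ^ (-C)) ∧
        (c * α ^ C ≤ K ∧ K ≤ C * α ^ (-C)) ∧
        ∃ 𝓑 : Finset ℚ,
          (∀ x ∈ 𝓑, (x.den : ℝ) ≤ Q ∧ 0 < x ∧ x ≤ 1) ∧
          (∃ γ : ℚ → ℝ,
            (∀ x ∈ 𝓑, γ x ∈ Set.Ioc (0 : ℝ) 1 ∧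
              |γ x - (x : ℝ) - round (γ x - (x : ℝ))| ≤ C * α ^ (-C) / N) ∧
            c * B * A.card * Real.sqrt Q / Real.log (1 / α) ^ 2 ≤
              ∑ x ∈ 𝓑, ‖hatInd A (γ x)‖) ∧
          (∀ x ∈ 𝓑, c * α * A.card / B ^ 2 ≤
            ∫ γ' in majorArcQ x N K,
              ‖hatInd A γ' - (α : ℂ) * hatInd (Finset.Icc 1 N) γ'‖ ^ 2) := by
  refine ⟨1 / 10 ^ 6, by norm_num, 368, by norm_num, fun N hN A hA hS α hα hα0 => ?_⟩
  have hN0 : (0 : ℝ) < N := by positivity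
  have hα1 : α ≤ 1 := by
    rw [hα, div_le_one hN0]
    exact_mod_cast (Finset.card_le_card hA).trans_eq (Nat.card_Icc 1 N)
  have hlo : 1 / 10 ^ 6 * α ^ (368 : ℝ) ≤ α := by
    linarith [Real.rpow_le_self_of_le_one hα0.le hα1 (by norm_num : (1 : ℝ) ≤ 368)]
  have hhi : α⁻¹ ^ 368 ≤ 368 * α ^ (-368 : ℝ) := by
    rw [Real.rpow_neg hα0.le, ← Real.inv_rpow hα0.le, Real.rpow_ofNat]
    linarith [pow_pos (inv_pos.2 hα0) 368]
  exact (hS.hasLargeMajorArcs hA hN hα0 (hα ▸ div_mul_cancel₀ _ hN0.ne')).mono hlo hhi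

theorem statement_9 :
    ∃ c > (0 : ℝ), ∃ C > (0 : ℝ), ∃ N₀ : ℕ, ∀ N : ℕ, N₀ ≤ N →
      ∀ A : Finset ℕ, A ⊆ Finset.Icc 1 N → NoSquareDiff A →
      ∀ α : ℝ, α = (A.card : ℝ) / N → (N : ℝ) ^ (-(1 / 3) : ℝ) ≤ α →
      ∃ B Q K : ℝ,
        (c * α ^ C ≤ B ∧ B ≤ C * α ^ (-C)) ∧
        (c * α ^ C ≤ Q ∧ Q ≤ C * α ^ (-C)) ∧
        (c * α ^ C ≤ K ∧ K ≤ C * α ^ (-C)) ∧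
        ∃ 𝓑 : Finset ℚ,
          (∀ x ∈ 𝓑, (x.den : ℝ) ≤ Q ∧ 0 < x ∧ x ≤ 1) ∧
          (∃ γ : ℚ → ℝ,
            (∀ x ∈ 𝓑, γ x ∈ Set.Ioc (0 : ℝ) 1 ∧
              |γ x - (x : ℝ) - round (γ x - (x : ℝ))| ≤ C * α ^ (-C) / N) ∧
            c * B * A.card * Real.sqrt Q / Real.log (1 / α) ^ 2 ≤
              ∑ x ∈ 𝓑, ‖hatInd A (γ x)‖) ∧
          (∀ x ∈ 𝓑, c * α * A.card / B ^ 2 ≤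
            ∫ γ' in majorArcQ x N K,
              ‖hatInd A γ' - (α : ℂ) * hatInd (Finset.Icc 1 N) γ'‖ ^ 2) := by
  obtain ⟨c, hc, C, hC, h⟩ := statement_9_general
  exact ⟨c, hc, C, hC, 2, fun N hN A hA hS α hα hαN =>
    h N hN A hA hS α hα ((Real.rpow_pos_of_pos (by positivity) _).trans_le hαN)⟩
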